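/- arXiv:1009.1123 — 8 statements merged into one kernel-verified Lean document; each statement's English description precedes it below -/
import Mathlib

section
/- Any finite-dimensional reductive Lie algebra over a field of characteristic zero (i.e. a Lie algebra l decomposing as l = c ⊕ l^s, the direct sum of its center c and a semisimple ideal l^s) which admits a symplectic form (a nondegenerate closed 2-form) is abelian, i.e. l^s = 0. -/
/-!
Let `s` be a Lie algebra with nondegenerate Killing form `κ`. A closed 2-form `ω` on `s` can be
written `ω x y = κ (D x) y`, and closedness of `ω` together with invariance of `κ` says exactly that
`D` is a derivation. Derivations of `s` are inner, so `D = ad h` and `ω x y = κ h ⁅x, y⁆`.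
In particular `h` lies in the kernel of `ω`; if `ω` is nondegenerate, then `h = 0`, hence `ω = 0`
and `s = 0`.

In a reductive Lie algebra, closedness makes the center `ω`-orthogonal to all brackets, hence to
`s`, which is perfect. So a symplectic form restricts to a symplectic form on `s`, and `s = 0`.
In characteristic zero a semisimple `s` has nondegenerate Killing form by Cartan's criterion.
-/

open LieAlgebra
open LinearMap (BilinForm)

/-- A closed 2-form on a Lie algebra: an alternating bilinear form whose cyclic sum over brackets
vanishes, i.e. a Chevalley–Eilenberg 2-cocycle with values in the trivial module. It may be
degenerate; symplectic forms are the nondegenerate closed 2-forms. -/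
structure IsClosedTwoForm {R L : Type*} [CommRing R] [LieRing L] [LieAlgebra R L]
    (ω : BilinForm R L) : Prop where
  isAlt : ω.IsAlt
  cyclic_sum_eq_zero (x y z : L) : ω x ⁅y, z⁆ + ω z ⁅x, y⁆ + ω y ⁅z, x⁆ = 0

section IsKilling

variable {F L : Type*} [Field F] [LieRing L] [LieAlgebra F L] [Module.Finite F L] [IsKilling F L]

theorem dual_eq_zero_of_apply_lie_eq_zero {f : Module.Dual F L} (hf : ∀ x y : L, f ⁅x, y⁆ = 0) :
    f = 0 := by
  have hκ := IsKilling.killingForm_nondegenerate F L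
  obtain ⟨t, rfl⟩ := ((killingForm F L).toDual hκ).surjective f
  have t_mem_center : t ∈ center F L := fun x ↦ by
    rw [← lie_skew, neg_eq_zero]
    refine hκ.1 _ fun y ↦ ?_
    rw [LieModule.traceForm_apply_lie_apply]
    exact hf x y
  have t_eq_zero : t = 0 := by simpa using t_mem_center
  rw [t_eq_zero, map_zero]

end IsKilling

namespace IsClosedTwoForm

section CommRing

variable {R L L' : Type*} [CommRing R] [LieRing L] [LieAlgebra R L] [LieRing L'] [LieAlgebra R L']
  {ω : BilinForm R L}

theorem comp (hω : IsClosedTwoForm ω) (f : L' →ₗ⁅R⁆ L) :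
    IsClosedTwoForm (BilinForm.comp ω (f : L' →ₗ[R] L) f) where
  isAlt x := hω.isAlt (f x)
  cyclic_sum_eq_zero x y z := by
    simpa only [BilinForm.comp_apply, LieHom.coe_toLinearMap, LieHom.map_lie] using
      hω.cyclic_sum_eq_zero (f x) (f y) (f z)

theorem apply_lie_of_mem_center (hω : IsClosedTwoForm ω) {z : L} (hz : z ∈ center R L) (x y : L) :
    ω z ⁅x, y⁆ = 0 := by
  have lie_z (u : L) : ⁅u, z⁆ = 0 := hz u
  have z_lie (u : L) : ⁅z, u⁆ = 0 := by rw [← lie_skew, lie_z, neg_zero]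
  simpa only [lie_z, z_lie, map_zero, add_zero] using hω.cyclic_sum_eq_zero z x y

end CommRing

section Field

variable {F L L' : Type*} [Field F] [LieRing L] [LieAlgebra F L] [LieRing L'] [LieAlgebra F L']
  {ω : BilinForm F L}

/-- The derivation `D` determined by `B (D x) y = ω x y`, where `ω` is a closed 2-form and `B` is a
nondegenerate invariant bilinear form. -/
noncomputable def toLieDerivation [Module.Finite F L] (hω : IsClosedTwoForm ω) {B : BilinForm F L}
    (hB : B.Nondegenerate) (hinv : B.lieInvariant L) : LieDerivation F L L where
  toLinearMap := ω.symmCompOfNondegenerate B hB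
  leibniz' x y := by
    refine sub_eq_zero.1 (hB.1 _ fun z ↦ ?_)
    have hskew : -ω ⁅x, y⁆ z = ω z ⁅x, y⁆ := hω.isAlt.neg_eq ⁅x, y⁆ z
    have hcyclic := hω.cyclic_sum_eq_zero x y z
    rw [← lie_skew z x, map_neg] at hcyclic
    simp only [map_sub, LinearMap.sub_apply, hinv _ _ z,
      BilinForm.symmCompOfNondegenerate_left_apply]
    linear_combination -hskew - hcyclic

theorem apply_toLieDerivation [Module.Finite F L] (hω : IsClosedTwoForm ω) {B : BilinForm F L}
    (hB : B.Nondegenerate) (hinv : B.lieInvariant L) (x y : L) :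
    B (hω.toLieDerivation hB hinv x) y = ω x y :=
  BilinForm.symmCompOfNondegenerate_left_apply ω hB y x

theorem exists_eq_killingForm_lie [Module.Finite F L] [IsKilling F L] (hω : IsClosedTwoForm ω) :
    ∃ h : L, ∀ x y : L, ω x y = killingForm F L h ⁅x, y⁆ := by
  have hκ := IsKilling.killingForm_nondegenerate F L
  have hinv := LieModule.traceForm_lieInvariant F L L
  obtain ⟨h, had⟩ := LieDerivation.IsKilling.exists_eq_ad (hω.toLieDerivation hκ hinv)
  refine ⟨h, fun x y ↦ ?_⟩
  calc
    ω x y = killingForm F L (LieDerivation.ad F L h x) y := by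
      rw [had, hω.apply_toLieDerivation hκ hinv]
    _ = killingForm F L ⁅h, x⁆ y := by rw [LieDerivation.ad_apply_apply]
    _ = killingForm F L h ⁅x, y⁆ := LieModule.traceForm_apply_lie_apply F L L h x y

theorem subsingleton_of_separatingLeft [Module.Finite F L] [IsKilling F L]
    (hω : IsClosedTwoForm ω) (hnondeg : ω.SeparatingLeft) : Subsingleton L := by
  obtain ⟨h, hexact⟩ := hω.exists_eq_killingForm_lie
  have h_eq_zero : h = 0 := hnondeg h fun y ↦ by
    rw [hexact, ← LieModule.traceForm_apply_lie_apply, lie_self, map_zero, LinearMap.zero_apply]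
  refine subsingleton_of_forall_eq 0 fun x ↦ hnondeg x fun y ↦ ?_
  rw [hexact, h_eq_zero, map_zero, LinearMap.zero_apply]

theorem apply_eq_zero_of_mem_center [Module.Finite F L'] [IsKilling F L']
    (hω : IsClosedTwoForm ω) (f : L' →ₗ⁅F⁆ L) {z : L} (hz : z ∈ center F L) (x : L') :
    ω z (f x) = 0 := by
  have hzero : ω z ∘ₗ (f : L' →ₗ[F] L) = 0 := dual_eq_zero_of_apply_lie_eq_zero fun u v ↦ by
    rw [LinearMap.comp_apply, LieHom.coe_toLinearMap, LieHom.map_lie, hω.apply_lie_of_mem_center hz]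
  exact LinearMap.congr_fun hzero x

theorem separatingLeft_comp [Module.Finite F L'] [IsKilling F L'] (hω : IsClosedTwoForm ω)
    (hnondeg : ω.SeparatingLeft) {f : L' →ₗ⁅F⁆ L} (hf : Function.Injective f)
    (hcodisjoint : Codisjoint (center F L).toSubmodule (LinearMap.range (f : L' →ₗ[F] L))) :
    (BilinForm.comp ω (f : L' →ₗ[F] L) f).SeparatingLeft := by
  intro x hx
  refine (map_eq_zero_iff f hf).1 (hnondeg (f x) fun y ↦ ?_)
  obtain ⟨z, _, hz, ⟨w, rfl⟩, rfl⟩ := Submodule.codisjoint_iff_exists_add_eq.1 hcodisjoint y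
  have hxz : ω (f x) z = 0 := hω.isAlt.isRefl z (f x) (hω.apply_eq_zero_of_mem_center f hz x)
  rw [map_add, hxz, zero_add]
  exact hx w

end Field

end IsClosedTwoForm

theorem reductive_symplectic_is_abelian_general
    {F L : Type*} [Field F] [LieRing L] [LieAlgebra F L]
    (s : LieIdeal F L) [Module.Finite F s] [IsKilling F s]
    (hcodisjoint : Codisjoint (center F L).toSubmodule s.toSubmodule)
    {ω : BilinForm F L} (hω : IsClosedTwoForm ω) (hnondeg : ω.SeparatingLeft) :
    s = ⊥ ∧ IsLieAbelian L := by
  have hrange : LinearMap.range (s.incl : s →ₗ[F] L) = s.toSubmodule := s.toSubmodule.range_subtype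
  have hnondeg_s := hω.separatingLeft_comp hnondeg s.incl_injective (hrange ▸ hcodisjoint)
  have : Subsingleton s := (hω.comp s.incl).subsingleton_of_separatingLeft hnondeg_s
  have hs : s = ⊥ := (LieSubmodule.toSubmodule_eq_bot s).1 s.toSubmodule.eq_bot_of_subsingleton
  refine ⟨hs, (isLieAbelian_iff_center_eq_top F L).2 ?_⟩
  simpa [hs] using hcodisjoint

/-- Any finite-dimensional reductive Lie algebra over a field of
characteristic zero (i.e. a Lie algebra `L` decomposing as the direct sum of its
center and a semisimple ideal `s`) which admits a symplectic form (a nondegenerate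
closed alternating 2-form) is abelian, i.e. the semisimple ideal `s` is zero. -/
theorem reductive_symplectic_is_abelian
    {F L : Type*} [Field F] [CharZero F]
    [LieRing L] [LieAlgebra F L] [FiniteDimensional F L]
    (s : LieIdeal F L) [LieAlgebra.IsSemisimple F s]
    (hreductive : IsCompl (LieAlgebra.center F L).toSubmodule s.toSubmodule)
    (ω : L →ₗ[F] L →ₗ[F] F)
    (halt : ∀ x : L, ω x x = 0)
    (hclosed : ∀ x y z : L, ω x ⁅y, z⁆ + ω z ⁅x, y⁆ + ω y ⁅z, x⁆ = 0)
    (hnondeg : ∀ x : L, (∀ y : L, ω x y = 0) → x = 0) :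
    s = ⊥ ∧ IsLieAbelian L :=
  reductive_symplectic_is_abelian_general s hreductive.codisjoint ⟨halt, hclosed⟩ hnondeg
end

section
/- A nonzero finite-dimensional semisimple Lie algebra over a field of characteristic zero admits no symplectic form: if l is semisimple and ω is a nondegenerate closed 2-form on l, then l = 0. -/
/-!
Let `B` be an invariant perfect pairing on `L`, such as the Killing form, and write a closed 2-form
as `ω x y = B (D x) y`. Closedness says exactly that `D` is a derivation. If `D = ad z` is inner,
then `ω x y = B ⁅z, x⁆ y = B z ⁅x, y⁆`, so `ω` is exact and `ω z y = B ⁅z, z⁆ y = 0`. Nondegeneracy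
of `ω` then gives `z = 0`, hence `ω = 0`, hence `L = 0`.
-/

open LinearMap (BilinForm)

section PerfectPairing

variable {K M N : Type*} [Field K] [AddCommGroup M] [Module K M] [AddCommGroup N] [Module K N]

theorem isPerfPair_of_nondegenerate [FiniteDimensional K M] {p : M →ₗ[K] N →ₗ[K] K}
    (hp : p.Nondegenerate) : p.IsPerfPair :=
  .of_injective (LinearMap.ker_eq_bot.mp (LinearMap.separatingLeft_iff_ker_eq_bot.mp hp.1))
    (LinearMap.ker_eq_bot.mp (LinearMap.separatingRight_iff_flip_ker_eq_bot.mp hp.2))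

end PerfectPairing

section ClosedForm

variable {R L : Type*} [CommRing R] [LieRing L] [LieAlgebra R L] {B ω : BilinForm R L}

/-- A 2-form on a Lie algebra is closed if its Chevalley–Eilenberg differential, with trivial
coefficients, vanishes. The alternating property is kept as a separate hypothesis. -/
def IsLieClosed (ω : BilinForm R L) : Prop :=
  ∀ x y z : L, ω x ⁅y, z⁆ + ω z ⁅x, y⁆ + ω y ⁅z, x⁆ = 0

theorem IsLieClosed.apply_lie_left (hclosed : IsLieClosed ω) (halt : ω.IsAlt) (x y z : L) :
    ω ⁅x, y⁆ z = ω x ⁅y, z⁆ - ω y ⁅x, z⁆ := by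
  have hcyc := hclosed x y z
  rw [← lie_skew z x, map_neg] at hcyc
  rw [← halt.neg_eq z ⁅x, y⁆]
  linear_combination -hcyc

theorem apply_lie_left_of_lieInvariant (hB : B.lieInvariant L) (x y z : L) :
    B ⁅x, y⁆ z = B x ⁅y, z⁆ := by
  rw [← lie_skew, map_neg, LinearMap.neg_apply, hB, neg_neg]

variable [B.IsPerfPair]

/-- The derivation `D` representing a closed 2-form `ω` with respect to an invariant perfect
pairing `B`, in the sense that `B (D x) y = ω x y`. -/
noncomputable def IsLieClosed.toLieDerivation (hclosed : IsLieClosed ω) (halt : ω.IsAlt)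
    (hB : B.lieInvariant L) : LieDerivation R L L where
  toLinearMap := B.toPerfPair.symm ∘ₗ ω
  leibniz' x y := by
    apply B.toPerfPair.injective
    ext w
    calc B.toPerfPair (B.toPerfPair.symm (ω ⁅x, y⁆)) w
      _ = ω x ⁅y, w⁆ - ω y ⁅x, w⁆ := by
        rw [LinearEquiv.apply_symm_apply, hclosed.apply_lie_left halt]
      _ = B ⁅x, B.toPerfPair.symm (ω y)⁆ w - B ⁅y, B.toPerfPair.symm (ω x)⁆ w := by
        simp only [hB x, hB y, LinearMap.apply_symm_toPerfPair_self]
        ring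
      _ = B.toPerfPair (⁅x, B.toPerfPair.symm (ω y)⁆ - ⁅y, B.toPerfPair.symm (ω x)⁆) w := by
        simp only [map_sub, LinearMap.sub_apply, LinearMap.toPerfPair_apply]

theorem IsLieClosed.apply_toLieDerivation (hclosed : IsLieClosed ω) (halt : ω.IsAlt)
    (hB : B.lieInvariant L) (x y : L) : B (hclosed.toLieDerivation halt hB x) y = ω x y :=
  LinearMap.congr_fun (B.apply_symm_toPerfPair_self (ω x)) y

theorem IsLieClosed.exists_eq_apply_lie (hclosed : IsLieClosed ω) (halt : ω.IsAlt)
    (hB : B.lieInvariant L) (hinner : Function.Surjective (LieDerivation.ad R L)) :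
    ∃ z, ∀ x y, ω x y = B z ⁅x, y⁆ := by
  obtain ⟨z, hz⟩ := hinner (hclosed.toLieDerivation halt hB)
  refine ⟨z, fun x y ↦ ?_⟩
  rw [← hclosed.apply_toLieDerivation halt hB, ← hz, LieDerivation.ad_apply_apply,
    apply_lie_left_of_lieInvariant hB]

theorem semisimple_no_symplectic_general (hB : B.lieInvariant L)
    (hinner : Function.Surjective (LieDerivation.ad R L)) (halt : ω.IsAlt)
    (hclosed : IsLieClosed ω) (hnondeg : ω.SeparatingLeft) : Subsingleton L := by
  obtain ⟨z, hω⟩ := hclosed.exists_eq_apply_lie halt hB hinner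
  have hz : z = 0 := hnondeg z fun y ↦ by
    rw [hω, ← apply_lie_left_of_lieInvariant hB, lie_self, map_zero, LinearMap.zero_apply]
  refine subsingleton_of_forall_eq 0 fun x ↦ hnondeg x fun y ↦ ?_
  rw [hω, hz, map_zero, LinearMap.zero_apply]

end ClosedForm

/-- A nonzero finite-dimensional semisimple Lie algebra over a field
of characteristic zero admits no symplectic form: if `L` is semisimple and `ω` is a
nondegenerate closed alternating 2-form on `L`, then `L = 0`. -/
theorem semisimple_no_symplectic
    {F L : Type*} [Field F] [CharZero F]
    [LieRing L] [LieAlgebra F L] [FiniteDimensional F L]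
    [LieAlgebra.IsSemisimple F L]
    (ω : L →ₗ[F] L →ₗ[F] F)
    (halt : ∀ x : L, ω x x = 0)
    (hclosed : ∀ x y z : L, ω x ⁅y, z⁆ + ω z ⁅x, y⁆ + ω y ⁅z, x⁆ = 0)
    (hnondeg : ∀ x : L, (∀ y : L, ω x y = 0) → x = 0) :
    ∀ x : L, x = 0 := by
  have := isPerfPair_of_nondegenerate (LieAlgebra.IsKilling.killingForm_nondegenerate F L)
  have : Subsingleton L := semisimple_no_symplectic_general (LieModule.traceForm_lieInvariant F L L)
    LieDerivation.IsKilling.exists_eq_ad halt hclosed hnondeg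
  exact fun x ↦ Subsingleton.elim x 0
end

section
/- Let k be a Lie algebra over a field admitting a semidirect decomposition k = s ⊕ p (direct sum of vector spaces) into a Lie subalgebra s and a Lie ideal p. Decompose a 2-form ρ on k as ρ = ρ₀ + ρ₁ + ρ₂, where ρ₀ vanishes whenever one argument lies in p, ρ₁ vanishes whenever one argument lies in s, and ρ₂ vanishes on s × s and on p × p. Then ρ is closed if and only if: (1) the restriction of ρ₀ to s is a closed 2-form on s and the restriction of ρ₁ to p is a closed 2-form on p; and (2) for all s, s′ ∈ s and p, p′ ∈ p, one has ρ₂(s, [p, p′]) = ρ₁([s, p], p′) + ρ₁(p, [s, p′]) and ρ₂([s, s′], p) + ρ₂([s′, p], s) + ρ₂([p, s], s′) = 0. -/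
/-!
The cyclic sum `ρ x ⁅y, z⁆ + ρ z ⁅x, y⁆ + ρ y ⁅z, x⁆` is additive in each argument and invariant
under cyclic permutations, so it vanishes identically as soon as it vanishes on triples of the four
types `s s s`, `p p p`, `s p p` and `s s p`. As `s` is a subalgebra and `p` an ideal, only `ρ₀`
contributes on `s s s`, only `ρ₁` on `p p p`, only `ρ₁` and `ρ₂` on `s p p`, and only `ρ₂` on
`s s p`; these contributions are the four conditions of the theorem.
-/

theorem forall_eq_zero_iff_of_cyclic_of_codisjoint {R V M : Type*} [Semiring R] [AddCommMonoid V]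
    [Module R V] [AddZeroClass M] {s p : Submodule R V} (hsp : Codisjoint s p) {T : V → V → V → M}
    (hadd : ∀ x x' y z, T (x + x') y z = T x y z + T x' y z)
    (hcyc : ∀ x y z, T x y z = T y z x) :
    (∀ x y z, T x y z = 0) ↔
      (∀ x ∈ s, ∀ y ∈ s, ∀ z ∈ s, T x y z = 0) ∧
      (∀ x ∈ p, ∀ y ∈ p, ∀ z ∈ p, T x y z = 0) ∧
      (∀ x ∈ s, ∀ y ∈ p, ∀ z ∈ p, T x y z = 0) ∧
      (∀ x ∈ s, ∀ y ∈ s, ∀ z ∈ p, T x y z = 0) := by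
  refine ⟨fun h ↦ by simp only [h, implies_true, and_self], ?_⟩
  rintro ⟨hsss, hppp, hspp, hssp⟩ x y z
  have left {y z : V} (hs : ∀ a ∈ s, T a y z = 0) (hp : ∀ b ∈ p, T b y z = 0) (x : V) :
      T x y z = 0 := by
    obtain ⟨a, b, ha, hb, rfl⟩ := Submodule.codisjoint_iff_exists_add_eq.mp hsp x
    rw [hadd, hs a ha, hp b hb, add_zero]
  have middle {x z : V} (hs : ∀ a ∈ s, T x a z = 0) (hp : ∀ b ∈ p, T x b z = 0) (y : V) :
      T x y z = 0 := by
    simp only [hcyc x] at hs hp ⊢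
    exact left hs hp y
  have right {x y : V} (hs : ∀ a ∈ s, T x y a = 0) (hp : ∀ b ∈ p, T x y b = 0) (z : V) :
      T x y z = 0 := by
    simp only [← hcyc _ x y] at hs hp ⊢
    exact left hs hp z
  refine left (fun a ha ↦ middle (fun a' ha' ↦ ?ss) (fun b hb ↦ ?sp) y)
    (fun b hb ↦ middle (fun a ha ↦ ?ps) (fun b' hb' ↦ ?pp) y) x
  case ss => exact right (hsss a ha a' ha') (hssp a ha a' ha') z
  case sp =>
    exact right (fun a' ha' ↦ hcyc a' a b ▸ hssp a' ha' a ha b hb) (hspp a ha b hb) z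
  case ps =>
    exact right (fun a' ha' ↦ hcyc b a a' ▸ hssp a ha a' ha' b hb)
      (fun b' hb' ↦ hcyc b a b' ▸ hspp a ha b' hb' b hb) z
  case pp =>
    exact right (fun a ha ↦ hcyc a b b' ▸ hspp a ha b hb b' hb') (hppp b hb b' hb') z

section CyclicBracketSum

variable {R K M : Type*} [CommRing R] [LieRing K] [LieAlgebra R K] [AddCommGroup M] [Module R M]

/-- The cyclic sum whose vanishing says that a 2-form `B` is closed. It is defined for every
bilinear map `B`, with values in any module; for alternating `B` it is, up to sign, the
Chevalley–Eilenberg differential of `B` with trivial coefficients. -/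
def cyclicBracketSum (B : K →ₗ[R] K →ₗ[R] M) (x y z : K) : M :=
  B x ⁅y, z⁆ + B z ⁅x, y⁆ + B y ⁅z, x⁆

namespace cyclicBracketSum

theorem add_form (B C : K →ₗ[R] K →ₗ[R] M) (x y z : K) :
    cyclicBracketSum (B + C) x y z = cyclicBracketSum B x y z + cyclicBracketSum C x y z := by
  simp only [cyclicBracketSum, LinearMap.add_apply]
  abel

theorem add_left (B : K →ₗ[R] K →ₗ[R] M) (x x' y z : K) :
    cyclicBracketSum B (x + x') y z = cyclicBracketSum B x y z + cyclicBracketSum B x' y z := by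
  simp only [cyclicBracketSum, map_add, LinearMap.add_apply, add_lie, lie_add]
  abel

theorem rotate (B : K →ₗ[R] K →ₗ[R] M) (x y z : K) :
    cyclicBracketSum B x y z = cyclicBracketSum B y z x := by
  simp only [cyclicBracketSum]
  abel

theorem forall_eq_zero_iff {s p : Submodule R K} (hsp : Codisjoint s p)
    (B : K →ₗ[R] K →ₗ[R] M) :
    (∀ x y z, cyclicBracketSum B x y z = 0) ↔
      (∀ x ∈ s, ∀ y ∈ s, ∀ z ∈ s, cyclicBracketSum B x y z = 0) ∧
      (∀ x ∈ p, ∀ y ∈ p, ∀ z ∈ p, cyclicBracketSum B x y z = 0) ∧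
      (∀ x ∈ s, ∀ y ∈ p, ∀ z ∈ p, cyclicBracketSum B x y z = 0) ∧
      (∀ x ∈ s, ∀ y ∈ s, ∀ z ∈ p, cyclicBracketSum B x y z = 0) :=
  forall_eq_zero_iff_of_cyclic_of_codisjoint hsp (add_left B) (rotate B)

variable {B : K →ₗ[R] K →ₗ[R] M} {s : LieSubalgebra R K} {p : LieIdeal R K} {x y z : K}

theorem eq_neg_of_isAlt (hB : B.IsAlt) (x y z : K) :
    cyclicBracketSum B x y z = -(B ⁅x, y⁆ z + B ⁅y, z⁆ x + B ⁅z, x⁆ y) := by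
  simp only [cyclicBracketSum, ← hB.neg x, ← hB.neg y, ← hB.neg z]
  abel

theorem eq_neg_of_isAlt_of_left_eq_zero (hB : B.IsAlt) (hx : ∀ w, B x w = 0) (y z : K) :
    cyclicBracketSum B x y z = -(B ⁅x, y⁆ z + B y ⁅x, z⁆) := by
  rw [cyclicBracketSum, hx, ← hB.neg z, ← lie_skew z x, map_neg]
  abel

theorem eq_zero_of_mem_lieIdeal (hB : ∀ x y, x ∈ p ∨ y ∈ p → B x y = 0) (x y : K) (hz : z ∈ p) :
    cyclicBracketSum B x y z = 0 := by
  rw [cyclicBracketSum, hB x _ (.inr (lie_mem_right R K p y z hz)), hB z _ (.inl hz),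
    hB y _ (.inr (lie_mem_left R K p z x hz)), add_zero, add_zero]

theorem eq_zero_of_mem_lieSubalgebra_of_mem (hB : ∀ x y, x ∈ s ∨ y ∈ s → B x y = 0)
    (hx : x ∈ s) (hy : y ∈ s) (z : K) : cyclicBracketSum B x y z = 0 := by
  rw [cyclicBracketSum, hB x _ (.inl hx), hB z _ (.inr (s.lie_mem hx hy)), hB y _ (.inl hy),
    add_zero, add_zero]

theorem eq_zero_of_isotropic (hB : ∀ x y, x ∈ s → y ∈ s → B x y = 0)
    (hx : x ∈ s) (hy : y ∈ s) (hz : z ∈ s) : cyclicBracketSum B x y z = 0 := by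
  rw [cyclicBracketSum, hB x _ hx (s.lie_mem hy hz), hB z _ hz (s.lie_mem hx hy),
    hB y _ hy (s.lie_mem hz hx), add_zero, add_zero]

theorem eq_apply_lie_of_isotropic (hB : ∀ x y, x ∈ p → y ∈ p → B x y = 0)
    (x : K) (hy : y ∈ p) (hz : z ∈ p) : cyclicBracketSum B x y z = B x ⁅y, z⁆ := by
  rw [cyclicBracketSum, hB z _ hz (lie_mem_right R K p x y hy),
    hB y _ hy (lie_mem_left R K p z x hz), add_zero, add_zero]

end cyclicBracketSum

open cyclicBracketSum in
theorem closed_two_form_semidirect_decomposition_general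
    {s : LieSubalgebra R K} {p : LieIdeal R K} (hsp : Codisjoint s.toSubmodule p.toSubmodule)
    {ρ₀ ρ₁ ρ₂ : K →ₗ[R] K →ₗ[R] M} (halt₁ : ρ₁.IsAlt) (halt₂ : ρ₂.IsAlt)
    (hρ₀ : ∀ x y, x ∈ p ∨ y ∈ p → ρ₀ x y = 0) (hρ₁ : ∀ x y, x ∈ s ∨ y ∈ s → ρ₁ x y = 0)
    (hρ₂s : ∀ x y, x ∈ s → y ∈ s → ρ₂ x y = 0) (hρ₂p : ∀ x y, x ∈ p → y ∈ p → ρ₂ x y = 0) :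
    (∀ x y z, cyclicBracketSum (ρ₀ + ρ₁ + ρ₂) x y z = 0) ↔
      (∀ x ∈ s, ∀ y ∈ s, ∀ z ∈ s, cyclicBracketSum ρ₀ x y z = 0) ∧
      (∀ x ∈ p, ∀ y ∈ p, ∀ z ∈ p, cyclicBracketSum ρ₁ x y z = 0) ∧
      (∀ a ∈ s, ∀ b ∈ p, ∀ b' ∈ p, ρ₂ a ⁅b, b'⁆ = ρ₁ ⁅a, b⁆ b' + ρ₁ b ⁅a, b'⁆) ∧
      (∀ a ∈ s, ∀ a' ∈ s, ∀ b ∈ p, ρ₂ ⁅a, a'⁆ b + ρ₂ ⁅a', b⁆ a + ρ₂ ⁅b, a⁆ a' = 0) := by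
  rw [forall_eq_zero_iff hsp]
  simp only [add_form]
  refine and_congr ?sss (and_congr ?ppp (and_congr ?spp ?ssp)) <;>
    refine forall₂_congr fun x hx ↦ forall₂_congr fun y hy ↦ forall₂_congr fun z hz ↦ ?_
  case sss =>
    rw [eq_zero_of_mem_lieSubalgebra_of_mem hρ₁ hx hy, eq_zero_of_isotropic hρ₂s hx hy hz,
      add_zero, add_zero]
  case ppp =>
    rw [eq_zero_of_mem_lieIdeal hρ₀ x y hz, eq_apply_lie_of_isotropic hρ₂p x hy hz,
      hρ₂p x _ hx (lie_mem_right R K p y z hz), zero_add, add_zero]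
  case spp =>
    rw [eq_zero_of_mem_lieIdeal hρ₀ x y hz, zero_add,
      eq_neg_of_isAlt_of_left_eq_zero halt₁ fun w ↦ hρ₁ x w (.inl hx),
      eq_apply_lie_of_isotropic hρ₂p x hy hz, neg_add_eq_zero, eq_comm]
  case ssp =>
    rw [eq_zero_of_mem_lieIdeal hρ₀ x y hz, eq_zero_of_mem_lieSubalgebra_of_mem hρ₁ hx hy,
      eq_neg_of_isAlt halt₂, zero_add, zero_add, neg_eq_zero]

end CyclicBracketSum

/-- Let `k = s ⊕ p` be a semidirect decomposition of a Lie algebra `k`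
over a field into a subalgebra `s` and an ideal `p`. Decompose an (alternating) 2-form
`ρ = ρ₀ + ρ₁ + ρ₂` into its `s`-part `ρ₀` (vanishing whenever one argument lies in `p`),
its `p`-part `ρ₁` (vanishing whenever one argument lies in `s`) and its mixed part `ρ₂`
(vanishing on `s × s` and on `p × p`).  Then `ρ` is closed if and only if (1) the
restrictions of `ρ₀` to `s` and of `ρ₁` to `p` are closed, and (2) for all `a, a' ∈ s`
and `b, b' ∈ p`:
`ρ₂ a ⁅b, b'⁆ = ρ₁ ⁅a, b⁆ b' + ρ₁ b ⁅a, b'⁆` and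
`ρ₂ ⁅a, a'⁆ b + ρ₂ ⁅a', b⁆ a + ρ₂ ⁅b, a⁆ a' = 0`. -/
theorem closed_two_form_semidirect_decomposition
    {F K : Type*} [Field F] [LieRing K] [LieAlgebra F K]
    (s : LieSubalgebra F K) (p : LieIdeal F K)
    (hcompl : IsCompl s.toSubmodule p.toSubmodule)
    (ρ₀ ρ₁ ρ₂ : K →ₗ[F] K →ₗ[F] F)
    (halt₀ : ∀ x : K, ρ₀ x x = 0) (halt₁ : ∀ x : K, ρ₁ x x = 0)
    (halt₂ : ∀ x : K, ρ₂ x x = 0)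
    (hρ₀ : ∀ x y : K, x ∈ p ∨ y ∈ p → ρ₀ x y = 0)
    (hρ₁ : ∀ x y : K, x ∈ s ∨ y ∈ s → ρ₁ x y = 0)
    (hρ₂s : ∀ x y : K, x ∈ s → y ∈ s → ρ₂ x y = 0)
    (hρ₂p : ∀ x y : K, x ∈ p → y ∈ p → ρ₂ x y = 0)
    (ρ : K →ₗ[F] K →ₗ[F] F) (hρ : ρ = ρ₀ + ρ₁ + ρ₂) :
    (∀ x y z : K, ρ x ⁅y, z⁆ + ρ z ⁅x, y⁆ + ρ y ⁅z, x⁆ = 0)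
      ↔ ((∀ x ∈ s, ∀ y ∈ s, ∀ z ∈ s, ρ₀ x ⁅y, z⁆ + ρ₀ z ⁅x, y⁆ + ρ₀ y ⁅z, x⁆ = 0)
        ∧ (∀ x ∈ p, ∀ y ∈ p, ∀ z ∈ p, ρ₁ x ⁅y, z⁆ + ρ₁ z ⁅x, y⁆ + ρ₁ y ⁅z, x⁆ = 0)
        ∧ (∀ a ∈ s, ∀ b ∈ p, ∀ b' ∈ p, ρ₂ a ⁅b, b'⁆ = ρ₁ ⁅a, b⁆ b' + ρ₁ b ⁅a, b'⁆)
        ∧ (∀ a ∈ s, ∀ a' ∈ s, ∀ b ∈ p,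
            ρ₂ ⁅a, a'⁆ b + ρ₂ ⁅a', b⁆ a + ρ₂ ⁅b, a⁆ a' = 0)) := by
  subst hρ
  exact closed_two_form_semidirect_decomposition_general hcompl.codisjoint halt₁ halt₂ hρ₀ hρ₁ hρ₂s
    hρ₂p
end

section
/- Let k be a Lie algebra over a field with semidirect decomposition k = s ⊕ p (s a Lie subalgebra, p a Lie ideal, direct sum of vector spaces), and let ρ = ρ₀ + ρ₁ be a 2-form on k with ρ₀ vanishing whenever one argument lies in p and ρ₁ vanishing whenever one argument lies in s (so s is ρ-orthogonal to p). Then ρ is closed if and only if the restriction of ρ₀ to s is closed, the restriction of ρ₁ to p is closed, and ρ₁ is ad_s-invariant, i.e. ρ₁([s, p], p′) + ρ₁(p, [s, p′]) = 0 for all s ∈ s and p, p′ ∈ p. -/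
/-!
For a bilinear map `ω` on a Lie algebra, the cyclic sum `dω` in the closedness condition is additive
in `ω` and in each argument, and invariant under cyclic rotation of the arguments. On `k = s + p`
it therefore vanishes as soon as it does for arguments of types `sss`, `ppp`, `spp` and `ssp`.
If `ω` is alternating and the contraction `ι_a ω` vanishes, Cartan's formula
`L_a ω = d ι_a ω + ι_a dω` reduces to `L_a ω = ι_a dω`. For the ideal `p` in the radical of `ρ₀`,
this gives `dρ₀ = 0` whenever one argument lies in `p`. For the subalgebra `s` in the radical of
`ρ₁`, it gives `dρ₁ = 0` whenever two arguments lie in `s`, and it identifies the vanishing of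
`dρ₁` on `spp` with the `ad s`-invariance of `ρ₁`.
-/

section LieDifferential

variable {R L M : Type*} [CommRing R] [LieRing L] [LieAlgebra R L] [AddCommGroup M] [Module R M]

/-- The left-hand side of the closedness condition for `ω`. For alternating `ω` it is the
Chevalley–Eilenberg differential `dω` with coefficients in the trivial module `M`; it is written as
a cyclic sum so that it is invariant under rotation of the arguments for every bilinear `ω`. -/
def lieDifferential (ω : L →ₗ[R] L →ₗ[R] M) (x y z : L) : M :=
  ω x ⁅y, z⁆ + ω z ⁅x, y⁆ + ω y ⁅z, x⁆

theorem lieDifferential_rotate (ω : L →ₗ[R] L →ₗ[R] M) (x y z : L) :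
    lieDifferential ω y z x = lieDifferential ω x y z := by
  simp only [lieDifferential]
  abel

theorem lieDifferential_add (ω η : L →ₗ[R] L →ₗ[R] M) (x y z : L) :
    lieDifferential (ω + η) x y z = lieDifferential ω x y z + lieDifferential η x y z := by
  simp only [lieDifferential, LinearMap.add_apply]
  abel

theorem lieDifferential_add_left (ω : L →ₗ[R] L →ₗ[R] M) (x x' y z : L) :
    lieDifferential ω (x + x') y z = lieDifferential ω x y z + lieDifferential ω x' y z := by
  simp only [lieDifferential, map_add, LinearMap.add_apply, add_lie, lie_add]
  abel

theorem lieDifferential_add_middle (ω : L →ₗ[R] L →ₗ[R] M) (x y y' z : L) :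
    lieDifferential ω x (y + y') z = lieDifferential ω x y z + lieDifferential ω x y' z := by
  simp only [← lieDifferential_rotate ω x, lieDifferential_add_left]

theorem lieDifferential_add_right (ω : L →ₗ[R] L →ₗ[R] M) (x y z z' : L) :
    lieDifferential ω x y (z + z') = lieDifferential ω x y z + lieDifferential ω x y z' := by
  simp only [← lieDifferential_rotate ω x, lieDifferential_add_middle]

theorem forall_lieDifferential_eq_zero_iff_of_codisjoint {ω : L →ₗ[R] L →ₗ[R] M}
    {U V : Submodule R L} (hUV : Codisjoint U V) :
    (∀ x y z, lieDifferential ω x y z = 0) ↔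
      (∀ x ∈ U, ∀ y ∈ U, ∀ z ∈ U, lieDifferential ω x y z = 0) ∧
      (∀ x ∈ V, ∀ y ∈ V, ∀ z ∈ V, lieDifferential ω x y z = 0) ∧
      (∀ x ∈ U, ∀ y ∈ V, ∀ z ∈ V, lieDifferential ω x y z = 0) ∧
      (∀ x ∈ U, ∀ y ∈ U, ∀ z ∈ V, lieDifferential ω x y z = 0) := by
  refine ⟨fun h ↦ ⟨fun x _ y _ z _ ↦ h x y z, fun x _ y _ z _ ↦ h x y z,
    fun x _ y _ z _ ↦ h x y z, fun x _ y _ z _ ↦ h x y z⟩, ?_⟩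
  rintro ⟨hUUU, hVVV, hUVV, hUUV⟩ x y z
  obtain ⟨u, v, hu, hv, rfl⟩ := Submodule.codisjoint_iff_exists_add_eq.mp hUV x
  obtain ⟨u', v', hu', hv', rfl⟩ := Submodule.codisjoint_iff_exists_add_eq.mp hUV y
  obtain ⟨u'', v'', hu'', hv'', rfl⟩ := Submodule.codisjoint_iff_exists_add_eq.mp hUV z
  have hUVU : lieDifferential ω u v' u'' = 0 := by
    rw [lieDifferential_rotate, hUUV u'' hu'' u hu v' hv']
  have hVUU : lieDifferential ω v u' u'' = 0 := by
    rw [← lieDifferential_rotate, hUUV u' hu' u'' hu'' v hv]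
  have hVUV : lieDifferential ω v u' v'' = 0 := by
    rw [← lieDifferential_rotate, hUVV u' hu' v'' hv'' v hv]
  have hVVU : lieDifferential ω v v' u'' = 0 := by
    rw [lieDifferential_rotate, hUVV u'' hu'' v hv v' hv']
  simp only [lieDifferential_add_left, lieDifferential_add_middle, lieDifferential_add_right,
    hUUU u hu u' hu' u'' hu'', hUUV u hu u' hu' v'' hv'', hUVU, hUVV u hu v' hv' v'' hv'',
    hVUU, hVUV, hVVU, hVVV v hv v' hv' v'' hv'', add_zero]

theorem lieDifferential_of_apply_eq_zero {ω : L →ₗ[R] L →ₗ[R] M} (hω : ω.IsAlt) {a : L}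
    (ha : ω a = 0) (x y : L) :
    lieDifferential ω a x y = -(ω ⁅a, x⁆ y + ω x ⁅a, y⁆) := by
  rw [lieDifferential, ha, LinearMap.zero_apply, zero_add, ← hω.neg, ← lie_skew y a, map_neg,
    neg_add]

theorem lieDifferential_eq_zero_of_mem_lieIdeal {ω : L →ₗ[R] L →ₗ[R] M} (hω : ω.IsAlt)
    {I : LieIdeal R L} (hI : I.toSubmodule ≤ LinearMap.ker ω) {b : L} (hb : b ∈ I) (x y : L) :
    lieDifferential ω b x y = 0 := by
  have apply_lie (z : L) : ω ⁅b, z⁆ = 0 := hI (lie_mem_left R L I b z hb)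
  rw [lieDifferential_of_apply_eq_zero hω (hI hb), ← hω.neg ⁅b, y⁆ x]
  simp only [apply_lie, LinearMap.zero_apply, neg_zero, add_zero]

theorem lieDifferential_eq_zero_of_mem_lieSubalgebra {ω : L →ₗ[R] L →ₗ[R] M} (hω : ω.IsAlt)
    {H : LieSubalgebra R L} (hH : H.toSubmodule ≤ LinearMap.ker ω) {a a' : L} (ha : a ∈ H)
    (ha' : a' ∈ H) (x : L) : lieDifferential ω a a' x = 0 := by
  have apply_lie : ω ⁅a, a'⁆ = 0 := hH (H.lie_mem ha ha')
  have apply_a' : ω a' = 0 := hH ha'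
  simp only [lieDifferential_of_apply_eq_zero hω (hH ha), apply_lie, apply_a',
    LinearMap.zero_apply, add_zero, neg_zero]

theorem closed_two_form_orthogonal_decomposition_general
    (s : LieSubalgebra R L) (p : LieIdeal R L) (hsp : Codisjoint s.toSubmodule p.toSubmodule)
    {ρ₀ ρ₁ : L →ₗ[R] L →ₗ[R] M} (halt₀ : ρ₀.IsAlt) (halt₁ : ρ₁.IsAlt)
    (hρ₀ : p.toSubmodule ≤ LinearMap.ker ρ₀) (hρ₁ : s.toSubmodule ≤ LinearMap.ker ρ₁) :
    (∀ x y z, lieDifferential (ρ₀ + ρ₁) x y z = 0) ↔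
      (∀ x ∈ s, ∀ y ∈ s, ∀ z ∈ s, lieDifferential ρ₀ x y z = 0) ∧
      (∀ x ∈ p, ∀ y ∈ p, ∀ z ∈ p, lieDifferential ρ₁ x y z = 0) ∧
      (∀ a ∈ s, ∀ b ∈ p, ∀ b' ∈ p, ρ₁ ⁅a, b⁆ b' + ρ₁ b ⁅a, b'⁆ = 0) := by
  have eq_of_mem_s {a a' : L} (ha : a ∈ s) (ha' : a' ∈ s) (x : L) :
      lieDifferential (ρ₀ + ρ₁) a a' x = lieDifferential ρ₀ a a' x := by
    rw [lieDifferential_add, lieDifferential_eq_zero_of_mem_lieSubalgebra halt₁ hρ₁ ha ha',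
      add_zero]
  have eq_of_mem_p {b : L} (hb : b ∈ p) (x y : L) :
      lieDifferential (ρ₀ + ρ₁) x y b = lieDifferential ρ₁ x y b := by
    rw [lieDifferential_add, lieDifferential_rotate ρ₀ b,
      lieDifferential_eq_zero_of_mem_lieIdeal halt₀ hρ₀ hb, zero_add]
  have ssp_eq_zero : ∀ a ∈ s, ∀ a' ∈ s, ∀ b ∈ p, lieDifferential (ρ₀ + ρ₁) a a' b = 0 :=
    fun a ha a' ha' b hb ↦ by
      rw [eq_of_mem_p hb, lieDifferential_eq_zero_of_mem_lieSubalgebra halt₁ hρ₁ ha ha']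
  refine (forall_lieDifferential_eq_zero_iff_of_codisjoint hsp).trans
    (and_congr ?_ (and_congr ?_ ((and_iff_left ssp_eq_zero).trans ?_)))
  · exact forall₄_congr fun a ha a' ha' ↦ forall₂_congr fun x _ ↦ by rw [eq_of_mem_s ha ha']
  · exact forall₄_congr fun x _ y _ ↦ forall₂_congr fun b hb ↦ by rw [eq_of_mem_p hb]
  · exact forall₄_congr fun a ha b _ ↦ forall₂_congr fun b' hb' ↦ by
      rw [eq_of_mem_p hb', lieDifferential_of_apply_eq_zero halt₁ (hρ₁ ha), neg_eq_zero]

end LieDifferential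

/-- Let `k = s ⊕ p` be a semidirect decomposition of a Lie algebra `k`
over a field into a subalgebra `s` and an ideal `p`, and let `ρ = ρ₀ + ρ₁` be a 2-form
with `s`-part `ρ₀` (vanishing whenever one argument lies in `p`) and `p`-part `ρ₁`
(vanishing whenever one argument lies in `s`), i.e. `s` is `ρ`-orthogonal to `p`.
Then `ρ` is closed if and only if the restriction of `ρ₀` to `s` is closed, the
restriction of `ρ₁` to `p` is closed, and `ρ₁` is `ad s`-invariant:
`ρ₁ ⁅a, b⁆ b' + ρ₁ b ⁅a, b'⁆ = 0` for all `a ∈ s`, `b, b' ∈ p`. -/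
theorem closed_two_form_orthogonal_decomposition
    {F K : Type*} [Field F] [LieRing K] [LieAlgebra F K]
    (s : LieSubalgebra F K) (p : LieIdeal F K)
    (hcompl : IsCompl s.toSubmodule p.toSubmodule)
    (ρ₀ ρ₁ : K →ₗ[F] K →ₗ[F] F)
    (halt₀ : ∀ x : K, ρ₀ x x = 0) (halt₁ : ∀ x : K, ρ₁ x x = 0)
    (hρ₀ : ∀ x y : K, x ∈ p ∨ y ∈ p → ρ₀ x y = 0)
    (hρ₁ : ∀ x y : K, x ∈ s ∨ y ∈ s → ρ₁ x y = 0)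
    (ρ : K →ₗ[F] K →ₗ[F] F) (hρ : ρ = ρ₀ + ρ₁) :
    (∀ x y z : K, ρ x ⁅y, z⁆ + ρ z ⁅x, y⁆ + ρ y ⁅z, x⁆ = 0)
      ↔ ((∀ x ∈ s, ∀ y ∈ s, ∀ z ∈ s, ρ₀ x ⁅y, z⁆ + ρ₀ z ⁅x, y⁆ + ρ₀ y ⁅z, x⁆ = 0)
        ∧ (∀ x ∈ p, ∀ y ∈ p, ∀ z ∈ p, ρ₁ x ⁅y, z⁆ + ρ₁ z ⁅x, y⁆ + ρ₁ y ⁅z, x⁆ = 0)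
        ∧ (∀ a ∈ s, ∀ b ∈ p, ∀ b' ∈ p, ρ₁ ⁅a, b⁆ b' + ρ₁ b ⁅a, b'⁆ = 0)) := by
  subst hρ
  exact closed_two_form_orthogonal_decomposition_general s p hcompl.codisjoint halt₀ halt₁
    (fun b hb ↦ LinearMap.ext fun y ↦ hρ₀ b y (.inl hb))
    (fun a ha ↦ LinearMap.ext fun y ↦ hρ₁ a y (.inl ha))
end

section
/- Let g^ℂ be a finite-dimensional complex semisimple Lie algebra with Cartan subalgebra h, root system R, and a fixed Weyl basis {E_α}. Let R⁺ ⊂ R be a positive root system, h₀ ⊆ h a subspace, and k = h₀ ⊕ g(R⁺) the corresponding Lie subalgebra of g^ℂ. Assume that for every α ∈ R⁺ the restriction α|_{h₀} is not identically zero, and for all α, β ∈ R⁺ the restriction (α+β)|_{h₀} is not identically zero. Then a 2-form ω ∈ Λ²(k*) is closed if and only if there exist constants μ_α ∈ ℂ (α ∈ R⁺) and a 2-form ω̂₀ ∈ Λ²(h₀*) (trivially extended to k) such that ω = ω̂₀ + Σ_{α∈R⁺} μ_α α∧ω_α + (1/2) Σ_{α,β∈R⁺} μ_{α+β} N_{αβ}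 ω_α∧ω_β (where the term μ_{α+β}N_{αβ} is interpreted as 0 when α+β ∉ R). If moreover σ is an antilinear involutive automorphism of g^ℂ preserving h with σ(α) = −α for all α ∈ R and h₀ + σ(h₀) = h, and g := (g^ℂ)^σ, then (k, ω) is a g-admissible pair if and only if in addition Im(ω̂₀) is nondegenerate on l := h₀ ∩ σ(h₀) ∩ g. -/
/-- An antilinear involutive automorphism (a "conjugation") of a complex Lie
algebra; its fixed point set is a real form. -/
structure LieAntiInvolution (L : Type*) [LieRing L] [LieAlgebra ℂ L] where
  toFun : L → L
  map_add' : ∀ x y, toFun (x + y) = toFun x + toFun y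
  map_smul' : ∀ (c : ℂ) (x), toFun (c • x) = (starRingEnd ℂ) c • toFun x
  map_lie' : ∀ x y, toFun ⁅x, y⁆ = ⁅toFun x, toFun y⁆
  invol : ∀ x, toFun (toFun x) = x

/-- The action of a conjugation `σ` on linear functionals: `σ(α) := conj ∘ α ∘ σ`. -/
noncomputable def LieAntiInvolution.dualConj {L : Type*} [LieRing L] [LieAlgebra ℂ L]
    (σ : LieAntiInvolution L) (α : Module.Dual ℂ L) : Module.Dual ℂ L where
  toFun x := (starRingEnd ℂ) (α (σ.toFun x))
  map_add' x y := by simp only [σ.map_add', map_add]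
  map_smul' c x := by
    simp only [σ.map_smul', map_smul, smul_eq_mul, map_mul, Complex.conj_conj,
      RingHom.id_apply]

open Finset
open scoped Classical

/-!
On `k` the expression attached to the coefficients `μ` is, up to sign, the differential of the
covector `φ = ∑ μ_α ω_α`, and every form that kills `[k, k] ⊆ g(P)` is closed; this gives
one direction. Conversely, closedness of `ω` on `(x, a, E_α)` with `x, a ∈ h₀` makes
`ω(·, E_α)` proportional to `α` on `h₀`, and the factors are the `μ_α`. After subtracting the
differential of `φ`, the form vanishes on `h₀ × g(P)`, and closedness on `(a, E_α, E_β)` reads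
`(α + β)(a) ω(E_α, E_β) = 0`, so it vanishes on `g(P) × g(P)` as well.

For admissibility, `σ` exchanges the root spaces of `α` and `-α`. Hence `k + σ(k)` is the whole
algebra and the real points of `k` are those of `h₀`, where `ω` and `ω̂₀` agree.
-/

open Module (Dual)
open Submodule (span)

section Forms

variable {K L : Type*} [CommRing K] [LieRing L] [LieAlgebra K L]

/-- Closedness of a 2-form on a subspace `k` of a Lie algebra; the form is given on the whole
algebra and only its values on `k × (k + [k, k])` matter. -/
def IsLieClosedOn (k : Submodule K L) (ω : LinearMap.BilinForm K L) : Prop :=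
  ∀ x ∈ k, ∀ y ∈ k, ∀ z ∈ k, ω x ⁅y, z⁆ + ω z ⁅x, y⁆ + ω y ⁅z, x⁆ = 0

/-- The 2-form `(x, y) ↦ φ [x, y]`, which is minus the Chevalley–Eilenberg differential of the
covector `φ`. -/
def lieCoboundary (φ : Dual K L) : LinearMap.BilinForm K L :=
  (LieModule.toEnd K L L : L →ₗ[K] Module.End K L).compr₂ φ

@[simp]
lemma lieCoboundary_apply (φ : Dual K L) (x y : L) : lieCoboundary φ x y = φ ⁅x, y⁆ := rfl

lemma lieCoboundary_isAlt (φ : Dual K L) : (lieCoboundary φ).IsAlt := fun x => by simp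

lemma isLieClosedOn_lieCoboundary (k : Submodule K L) (φ : Dual K L) :
    IsLieClosedOn k (lieCoboundary φ) := by
  intro x _ y _ z _
  have jacobi : ⁅x, ⁅y, z⁆⁆ + ⁅z, ⁅x, y⁆⁆ + ⁅y, ⁅z, x⁆⁆ = 0 := by
    rw [← lie_jacobi x y z]; abel
  simp only [lieCoboundary_apply, ← map_add, jacobi, map_zero]

namespace IsLieClosedOn

variable {k : Submodule K L} {ω ω' : LinearMap.BilinForm K L}

lemma of_apply_lie_eq_zero (h : ∀ x ∈ k, ∀ y ∈ k, ∀ z ∈ k, ω x ⁅y, z⁆ = 0) :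
    IsLieClosedOn k ω := fun x hx y hy z hz => by
  rw [h x hx y hy z hz, h z hz x hx y hy, h y hy z hz x hx, add_zero, add_zero]

lemma add (h : IsLieClosedOn k ω) (h' : IsLieClosedOn k ω') : IsLieClosedOn k (ω + ω') := by
  intro x hx y hy z hz
  simp only [LinearMap.add_apply]
  linear_combination h x hx y hy z hz + h' x hx y hy z hz

lemma sub (h : IsLieClosedOn k ω) (h' : IsLieClosedOn k ω') : IsLieClosedOn k (ω - ω') := by
  intro x hx y hy z hz
  simp only [LinearMap.sub_apply]
  linear_combination h x hx y hy z hz - h' x hx y hy z hz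

lemma congr (hk : ∀ x ∈ k, ∀ y ∈ k, ⁅x, y⁆ ∈ k) (hω : IsLieClosedOn k ω)
    (h : ∀ x ∈ k, ∀ y ∈ k, ω' x y = ω x y) : IsLieClosedOn k ω' := by
  intro x hx y hy z hz
  rw [h x hx _ (hk y hy z hz), h z hz _ (hk x hx y hy), h y hy _ (hk z hz x hx)]
  exact hω x hx y hy z hz

end IsLieClosedOn

end Forms

section RegularSubspace

variable {K L : Type*} [CommRing K] [AddCommGroup L] [Module K L]
variable {h : Submodule K L} {P : Finset (Dual K L)} {E : Dual K L → L}

/-- The subspace `h ⊕ g(P)`, where `g(P)` is spanned by the root vectors `E α`, `α ∈ P`. -/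
def regularSubspace (h : Submodule K L) (P : Finset (Dual K L)) (E : Dual K L → L) :
    Submodule K L :=
  h ⊔ span K (E '' P)

lemma regularSubspace_eq_span : regularSubspace h P E = span K (h ∪ E '' P) := by
  rw [regularSubspace, Submodule.span_union, Submodule.span_eq]

lemma mem_regularSubspace_of_mem_cartan {x : L} (hx : x ∈ h) : x ∈ regularSubspace h P E :=
  Submodule.mem_sup_left hx

lemma mem_regularSubspace_of_mem_span {x : L} (hx : x ∈ span K (E '' P)) :
    x ∈ regularSubspace h P E :=
  Submodule.mem_sup_right hx

lemma root_mem_span {α : Dual K L} (hα : α ∈ P) : E α ∈ span K (E '' P) :=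
  Submodule.subset_span ⟨α, hα, rfl⟩

lemma root_mem_regularSubspace {α : Dual K L} (hα : α ∈ P) : E α ∈ regularSubspace h P E :=
  mem_regularSubspace_of_mem_span (root_mem_span hα)

lemma regularSubspace_le {V : Submodule K L} (hh : h ≤ V) (hE : ∀ α ∈ P, E α ∈ V) :
    regularSubspace h P E ≤ V :=
  sup_le hh (Submodule.span_le.2 (Set.image_subset_iff.2 hE))

lemma eqOn_regularSubspace_of_isAlt {B B' : LinearMap.BilinForm K L}
    (hB : B.IsAlt) (hB' : B'.IsAlt)
    (hhh : ∀ x ∈ h, ∀ y ∈ h, B x y = B' x y)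
    (hhE : ∀ x ∈ h, ∀ α ∈ P, B x (E α) = B' x (E α))
    (hEE : ∀ α ∈ P, ∀ β ∈ P, B (E α) (E β) = B' (E α) (E β)) :
    ∀ x ∈ regularSubspace h P E, ∀ y ∈ regularSubspace h P E, B x y = B' x y := by
  intro x hx y hy
  rw [regularSubspace_eq_span] at hx hy
  refine sub_eq_zero.1 (LinearMap.BilinMap.apply_apply_mem_of_mem_span ⊥ _ _ (B - B') ?_ x y hx hy)
  rintro x (hx | ⟨α, hα, rfl⟩) y (hy | ⟨β, hβ, rfl⟩)
  · exact sub_eq_zero.2 (hhh x hx y hy)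
  · exact sub_eq_zero.2 (hhE x hx β hβ)
  · refine sub_eq_zero.2 ?_
    rw [← hB.neg_eq y (E α), ← hB'.neg_eq y (E α), hhE y hy α hα]
  · exact sub_eq_zero.2 (hEE α hα β hβ)

lemma add_ne_zero_of_exists_apply_ne_zero
    (hαβ : ∀ α ∈ P, ∀ β ∈ P, ∃ a ∈ h, (α + β) a ≠ 0) : ∀ α ∈ P, ∀ β ∈ P, α + β ≠ 0 := by
  intro α hα β hβ hzero
  obtain ⟨a, -, ha⟩ := hαβ α hα β hβ
  exact ha (by rw [hzero, LinearMap.zero_apply])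

end RegularSubspace

section Covectors

variable {K L : Type*} [CommRing K] [AddCommGroup L] [Module K L]

/-- The covector `∑ μ α • ωc α`, whose differential is the root part of a closed 2-form. -/
def rootCovector (P : Finset (Dual K L)) (ωc : Dual K L → Dual K L) (μ : Dual K L → K) :
    Dual K L :=
  ∑ α ∈ P, μ α • ωc α

/-- The projection of `h ⊕ g(P)` onto `h` along `g(P)`, extended to the whole algebra by means of
the dual covectors. -/
def cartanProjection (P : Finset (Dual K L)) (E : Dual K L → L) (ωc : Dual K L → Dual K L) :
    L →ₗ[K] L :=
  LinearMap.id - ∑ α ∈ P, (ωc α).smulRight (E α)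

lemma rootCovector_apply (P : Finset (Dual K L)) (ωc : Dual K L → Dual K L) (μ : Dual K L → K)
    (x : L) : rootCovector P ωc μ x = ∑ α ∈ P, μ α * ωc α x := by
  simp [rootCovector]

lemma cartanProjection_apply (P : Finset (Dual K L)) (E : Dual K L → L)
    (ωc : Dual K L → Dual K L) (x : L) :
    cartanProjection P E ωc x = x - ∑ α ∈ P, ωc α x • E α := by
  simp [cartanProjection]

/-- The wedge product `φ ∧ ψ` of two covectors, normalized without a factor `1/2`. -/
def dualWedge (φ ψ : Dual K L) : LinearMap.BilinForm K L :=
  φ.smulRight ψ - ψ.smulRight φ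

lemma dualWedge_apply (φ ψ : Dual K L) (x y : L) :
    dualWedge φ ψ x y = φ x * ψ y - φ y * ψ x := by
  simp [dualWedge, mul_comm]

end Covectors

section RootForm

variable {K L : Type*} [Field K] [AddCommGroup L] [Module K L]

/-- The root part `∑ μ_α α ∧ ω_α + (1/2) ∑ μ_{α+β} N_{αβ} ω_α ∧ ω_β` of a closed 2-form. -/
def rootForm (P : Finset (Dual K L)) (N : Dual K L → Dual K L → K) (ωc : Dual K L → Dual K L)
    (μ : Dual K L → K) : LinearMap.BilinForm K L :=
  ∑ α ∈ P, μ α • dualWedge α (ωc α)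
    + (1 / 2 : K) • ∑ α ∈ P, ∑ β ∈ P, (μ (α + β) * N α β) • dualWedge (ωc α) (ωc β)

/-- `ω` is on `h ⊕ g(P)` the sum of the 2-form `ω₀`, trivially extended from `h`, and the root
part with coefficients `μ`. The coefficients vanish off `P`, which makes the terms with
`α + β ∉ P` zero. -/
def HasNormalForm (h : Submodule K L) (P : Finset (Dual K L)) (E : Dual K L → L)
    (N : Dual K L → Dual K L → K) (ωc : Dual K L → Dual K L)
    (ω : LinearMap.BilinForm K L) (μ : Dual K L → K) (ω₀ : LinearMap.BilinForm K L) : Prop :=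
  (∀ γ, γ ∉ P → μ γ = 0)
    ∧ (∀ x, ω₀ x x = 0)
    ∧ (∀ x y, x ∈ span K (E '' P) ∨ y ∈ span K (E '' P) → ω₀ x y = 0)
    ∧ ∀ x ∈ regularSubspace h P E, ∀ y ∈ regularSubspace h P E,
        ω x y = ω₀ x y + rootForm P N ωc μ x y

lemma rootForm_apply (P : Finset (Dual K L)) (N : Dual K L → Dual K L → K)
    (ωc : Dual K L → Dual K L) (μ : Dual K L → K) (x y : L) :
    rootForm P N ωc μ x y = ∑ α ∈ P, μ α * (α x * ωc α y - α y * ωc α x)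
      + (1 / 2) * ∑ α ∈ P, ∑ β ∈ P,
          μ (α + β) * N α β * (ωc α x * ωc β y - ωc α y * ωc β x) := by
  simp only [rootForm, LinearMap.add_apply, LinearMap.smul_apply, LinearMap.sum_apply,
    dualWedge_apply, smul_eq_mul]

lemma rootForm_isAlt (P : Finset (Dual K L)) (N : Dual K L → Dual K L → K)
    (ωc : Dual K L → Dual K L) (μ : Dual K L → K) : (rootForm P N ωc μ).IsAlt := fun x => by
  simp [rootForm_apply, mul_comm]

end RootForm

section RootVectorSystem

variable {K L : Type*} [CommRing K] [LieRing L] [LieAlgebra K L]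

/-- Root vectors `E α` for the weights `α ∈ P` of an abelian subspace `h`, with structure
constants `N` and dual covectors `ωc`. Nothing is required of `[E α, E (-α)]`, and `N α β` matters
only when `α + β ∈ P`. -/
structure IsRootVectorSystem (h : Submodule K L) (P : Finset (Dual K L)) (E : Dual K L → L)
    (N : Dual K L → Dual K L → K) (ωc : Dual K L → Dual K L) : Prop where
  lie_cartan : ∀ x ∈ h, ∀ y ∈ h, ⁅x, y⁆ = 0
  lie_root : ∀ α ∈ P, ∀ x ∈ h, ⁅x, E α⁆ = α x • E α
  apply_root : ∀ α ∈ P, ∀ β ∈ P, α (E β) = 0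
  lie_root_root : ∀ α ∈ P, ∀ β ∈ P, α + β ∈ P → ⁅E α, E β⁆ = N α β • E (α + β)
  lie_root_root_eq_zero : ∀ α ∈ P, ∀ β ∈ P, α + β ≠ 0 → α + β ∉ P → ⁅E α, E β⁆ = 0
  dual_cartan : ∀ α ∈ P, ∀ x ∈ h, ωc α x = 0
  dual_root : ∀ α ∈ P, ∀ β ∈ P, ωc α (E β) = if α = β then 1 else 0

namespace IsRootVectorSystem

variable {h h₀ : Submodule K L} {P R : Finset (Dual K L)} {E : Dual K L → L}
  {N : Dual K L → Dual K L → K} {ωc : Dual K L → Dual K L}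

lemma restrict (hE : IsRootVectorSystem h R E N ωc) (hh₀ : h₀ ≤ h) (hPR : P ⊆ R)
    (hclosed : ∀ α ∈ P, ∀ β ∈ P, α + β ∈ R → α + β ∈ P) :
    IsRootVectorSystem h₀ P E N ωc where
  lie_cartan x hx y hy := hE.lie_cartan x (hh₀ hx) y (hh₀ hy)
  lie_root α hα x hx := hE.lie_root α (hPR hα) x (hh₀ hx)
  apply_root α hα β hβ := hE.apply_root α (hPR hα) β (hPR hβ)
  lie_root_root α hα β hβ hαβ := hE.lie_root_root α (hPR hα) β (hPR hβ) (hPR hαβ)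
  lie_root_root_eq_zero α hα β hβ hne hαβ :=
    hE.lie_root_root_eq_zero α (hPR hα) β (hPR hβ) hne (mt (hclosed α hα β hβ) hαβ)
  dual_cartan α hα x hx := hE.dual_cartan α (hPR hα) x (hh₀ hx)
  dual_root α hα β hβ := hE.dual_root α (hPR hα) β (hPR hβ)

variable (hE : IsRootVectorSystem h P E N ωc)
include hE

lemma lie_mem_span (hP : ∀ α ∈ P, ∀ β ∈ P, α + β ≠ 0) {x y : L}
    (hx : x ∈ regularSubspace h P E) (hy : y ∈ regularSubspace h P E) :
    ⁅x, y⁆ ∈ span K (E '' P) := by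
  rw [regularSubspace_eq_span] at hx hy
  refine LinearMap.BilinMap.apply_apply_mem_of_mem_span _ _ _
    (LieModule.toEnd K L L : L →ₗ[K] Module.End K L) ?_ x y hx hy
  simp only [LieHom.coe_toLinearMap, LieModule.toEnd_apply_apply]
  rintro x (hx | ⟨α, hα, rfl⟩) y (hy | ⟨β, hβ, rfl⟩)
  · rw [hE.lie_cartan x hx y hy]
    exact Submodule.zero_mem _
  · rw [hE.lie_root β hβ x hx]
    exact Submodule.smul_mem _ _ (root_mem_span hβ)
  · rw [← lie_skew, hE.lie_root α hα y hy]
    exact Submodule.neg_mem _ (Submodule.smul_mem _ _ (root_mem_span hα))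
  · by_cases hαβ : α + β ∈ P
    · rw [hE.lie_root_root α hα β hβ hαβ]
      exact Submodule.smul_mem _ _ (root_mem_span hαβ)
    · rw [hE.lie_root_root_eq_zero α hα β hβ (hP α hα β hβ) hαβ]
      exact Submodule.zero_mem _

lemma rootCovector_root (μ : Dual K L → K) {β : Dual K L} (hβ : β ∈ P) :
    rootCovector P ωc μ (E β) = μ β := by
  rw [rootCovector_apply, Finset.sum_eq_single_of_mem β hβ]
  · rw [hE.dual_root β hβ β hβ, if_pos rfl, mul_one]
  · intro α hα hne
    rw [hE.dual_root α hα β hβ, if_neg hne, mul_zero]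

lemma rootCovector_lie_root (μ : Dual K L → K) {x : L} (hx : x ∈ h) {β : Dual K L} (hβ : β ∈ P) :
    rootCovector P ωc μ ⁅x, E β⁆ = μ β * β x := by
  rw [hE.lie_root β hβ x hx, map_smul, hE.rootCovector_root μ hβ, smul_eq_mul, mul_comm]

lemma rootCovector_lie_root_root (hP : ∀ α ∈ P, ∀ β ∈ P, α + β ≠ 0) {μ : Dual K L → K}
    (hμ : ∀ γ, γ ∉ P → μ γ = 0) {α β : Dual K L} (hα : α ∈ P) (hβ : β ∈ P) :
    rootCovector P ωc μ ⁅E α, E β⁆ = μ (α + β) * N α β := by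
  by_cases hαβ : α + β ∈ P
  · rw [hE.lie_root_root α hα β hβ hαβ, map_smul, hE.rootCovector_root μ hαβ, smul_eq_mul,
      mul_comm]
  · rw [hE.lie_root_root_eq_zero α hα β hβ (hP α hα β hβ) hαβ, hμ _ hαβ, map_zero, zero_mul]

lemma sum_sum_mul_dual_root_root (c : Dual K L → Dual K L → K) {α β : Dual K L}
    (hα : α ∈ P) (hβ : β ∈ P) :
    ∑ γ ∈ P, ∑ δ ∈ P, c γ δ * (ωc γ (E α) * ωc δ (E β)) = c α β := by
  simp_rw [mul_comm (ωc _ (E α)), ← mul_assoc, ← Finset.sum_mul, ← rootCovector_apply,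
    hE.rootCovector_root _ hβ]
  exact hE.rootCovector_root (fun γ => c γ β) hα

lemma cartanProjection_cartan {x : L} (hx : x ∈ h) : cartanProjection P E ωc x = x := by
  rw [cartanProjection_apply, Finset.sum_eq_zero, sub_zero]
  intro α hα
  rw [hE.dual_cartan α hα x hx, zero_smul]

lemma cartanProjection_root {β : Dual K L} (hβ : β ∈ P) : cartanProjection P E ωc (E β) = 0 := by
  rw [cartanProjection_apply, Finset.sum_eq_single_of_mem β hβ]
  · rw [hE.dual_root β hβ β hβ, if_pos rfl, one_smul, sub_self]
  · intro α hα hne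
    rw [hE.dual_root α hα β hβ, if_neg hne, zero_smul]

lemma cartanProjection_span {x : L} (hx : x ∈ span K (E '' P)) :
    cartanProjection P E ωc x = 0 := by
  have hle : span K (E '' P) ≤ LinearMap.ker (cartanProjection P E ωc) :=
    Submodule.span_le.2 (Set.image_subset_iff.2 fun _ hα => hE.cartanProjection_root hα)
  exact hle hx

lemma mem_cartan_of_dual_eq_zero {x : L} (hx : x ∈ regularSubspace h P E)
    (h0 : ∀ α ∈ P, ωc α x = 0) : x ∈ h := by
  have hproj : regularSubspace h P E ≤ h.comap (cartanProjection P E ωc) :=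
    regularSubspace_le
      (fun y hy => by rwa [Submodule.mem_comap, hE.cartanProjection_cartan hy])
      (fun α hα => by
        rw [Submodule.mem_comap, hE.cartanProjection_root hα]; exact h.zero_mem)
  have hpx := hproj hx
  rwa [Submodule.mem_comap, cartanProjection_apply, Finset.sum_eq_zero, sub_zero] at hpx
  intro α hα
  rw [h0 α hα, zero_smul]

lemma structureConstant_skew {α β : Dual K L} (hα : α ∈ P) (hβ : β ∈ P) (hαβ : α + β ∈ P) :
    N β α = -N α β := by
  have hskew := congrArg (ωc (α + β)) (lie_skew (E β) (E α))
  rw [hE.lie_root_root α hα β hβ hαβ, hE.lie_root_root β hβ α hα (add_comm α β ▸ hαβ),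
    add_comm β α] at hskew
  simpa [hE.dual_root _ hαβ _ hαβ] using hskew.symm

end IsRootVectorSystem

end RootVectorSystem

section NormalForm

variable {K L : Type*} [Field K] [LieRing L] [LieAlgebra K L]

namespace IsRootVectorSystem

variable {h : Submodule K L} {P : Finset (Dual K L)} {E : Dual K L → L}
  {N : Dual K L → Dual K L → K} {ωc : Dual K L → Dual K L} {μ : Dual K L → K}
  {ω ω₀ : LinearMap.BilinForm K L} (hE : IsRootVectorSystem h P E N ωc)
include hE

lemma rootForm_cartan_root (μ : Dual K L → K) {x : L} (hx : x ∈ h) {β : Dual K L} (hβ : β ∈ P) :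
    rootForm P N ωc μ x (E β) = μ β * β x := by
  rw [rootForm_apply, ← hE.rootCovector_root (fun α => μ α * α x) hβ, rootCovector_apply]
  have hwedge : ∑ α ∈ P, ∑ γ ∈ P, μ (α + γ) * N α γ *
      (ωc α x * ωc γ (E β) - ωc α (E β) * ωc γ x) = 0 :=
    Finset.sum_eq_zero fun α hα => Finset.sum_eq_zero fun γ hγ => by
      rw [hE.dual_cartan α hα x hx, hE.dual_cartan γ hγ x hx]; ring
  rw [hwedge, mul_zero, add_zero]
  refine Finset.sum_congr rfl fun α hα => ?_
  rw [hE.dual_cartan α hα x hx]; ring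

lemma rootForm_cartan_cartan (μ : Dual K L → K) {x y : L} (hx : x ∈ h) (hy : y ∈ h) :
    rootForm P N ωc μ x y = 0 := by
  have h₁ : ∑ α ∈ P, μ α * (α x * ωc α y - α y * ωc α x) = 0 :=
    Finset.sum_eq_zero fun α hα => by
      rw [hE.dual_cartan α hα x hx, hE.dual_cartan α hα y hy]; ring
  have h₂ : ∑ α ∈ P, ∑ β ∈ P, μ (α + β) * N α β * (ωc α x * ωc β y - ωc α y * ωc β x) = 0 :=
    Finset.sum_eq_zero fun α hα => Finset.sum_eq_zero fun β hβ => by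
      rw [hE.dual_cartan α hα x hx, hE.dual_cartan β hβ x hx]; ring
  rw [rootForm_apply, h₁, h₂, mul_zero, add_zero]

lemma rootForm_root_root [NeZero (2 : K)] (hμ : ∀ γ, γ ∉ P → μ γ = 0) {α β : Dual K L}
    (hα : α ∈ P) (hβ : β ∈ P) :
    rootForm P N ωc μ (E α) (E β) = μ (α + β) * N α β := by
  have h₁ : ∑ γ ∈ P, μ γ * (γ (E α) * ωc γ (E β) - γ (E β) * ωc γ (E α)) = 0 :=
    Finset.sum_eq_zero fun γ hγ => by
      rw [hE.apply_root γ hγ α hα, hE.apply_root γ hγ β hβ]; ring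
  have hskew : μ (β + α) * N β α = -(μ (α + β) * N α β) := by
    rw [add_comm β α]
    by_cases hαβ : α + β ∈ P
    · rw [hE.structureConstant_skew hα hβ hαβ, mul_neg]
    · rw [hμ _ hαβ, zero_mul, zero_mul, neg_zero]
  rw [rootForm_apply, h₁]
  simp_rw [mul_sub, Finset.sum_sub_distrib]
  rw [hE.sum_sum_mul_dual_root_root (fun γ δ => μ (γ + δ) * N γ δ) hα hβ,
    hE.sum_sum_mul_dual_root_root (fun γ δ => μ (γ + δ) * N γ δ) hβ hα, hskew]
  field_simp
  ring

lemma rootForm_eq_lieCoboundary [NeZero (2 : K)] (hP : ∀ α ∈ P, ∀ β ∈ P, α + β ≠ 0)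
    (hμ : ∀ γ, γ ∉ P → μ γ = 0) :
    ∀ x ∈ regularSubspace h P E, ∀ y ∈ regularSubspace h P E,
      rootForm P N ωc μ x y = lieCoboundary (rootCovector P ωc μ) x y := by
  refine eqOn_regularSubspace_of_isAlt (rootForm_isAlt P N ωc μ) (lieCoboundary_isAlt _) ?_ ?_ ?_
  · intro x hx y hy
    rw [hE.rootForm_cartan_cartan μ hx hy, lieCoboundary_apply, hE.lie_cartan x hx y hy, map_zero]
  · intro x hx α hα
    rw [hE.rootForm_cartan_root μ hx hα, lieCoboundary_apply, hE.rootCovector_lie_root μ hx hα]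
  · intro α hα β hβ
    rw [hE.rootForm_root_root hμ hα hβ, lieCoboundary_apply,
      hE.rootCovector_lie_root_root hP hμ hα hβ]

lemma isLieClosedOn_of_hasNormalForm [NeZero (2 : K)] (hP : ∀ α ∈ P, ∀ β ∈ P, α + β ≠ 0)
    (hω : HasNormalForm h P E N ωc ω μ ω₀) : IsLieClosedOn (regularSubspace h P E) ω := by
  obtain ⟨hμ, -, hω₀, hω⟩ := hω
  have hω₀closed : IsLieClosedOn (regularSubspace h P E) ω₀ :=
    .of_apply_lie_eq_zero fun x _ y hy z hz => hω₀ _ _ (.inr (hE.lie_mem_span hP hy hz))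
  refine (hω₀closed.add (isLieClosedOn_lieCoboundary _ (rootCovector P ωc μ))).congr
    (fun x hx y hy => mem_regularSubspace_of_mem_span (hE.lie_mem_span hP hx hy)) ?_
  intro x hx y hy
  rw [hω x hx y hy, hE.rootForm_eq_lieCoboundary hP hμ x hx y hy, LinearMap.add_apply,
    LinearMap.add_apply]

lemma exists_apply_root_eq_mul (hω : IsLieClosedOn (regularSubspace h P E) ω) {α : Dual K L}
    (hα : α ∈ P) (hα₀ : ∃ a ∈ h, α a ≠ 0) : ∃ m, ∀ x ∈ h, ω x (E α) = m * α x := by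
  obtain ⟨a, ha, hαa⟩ := hα₀
  refine ⟨ω a (E α) / α a, fun x hx => ?_⟩
  have hclosed := hω x (mem_regularSubspace_of_mem_cartan hx) a
    (mem_regularSubspace_of_mem_cartan ha) (E α) (root_mem_regularSubspace hα)
  rw [← lie_skew (E α) x, hE.lie_cartan x hx a ha, hE.lie_root α hα a ha,
    hE.lie_root α hα x hx] at hclosed
  simp only [map_smul, map_neg, map_zero, smul_eq_mul, add_zero] at hclosed
  field_simp
  linear_combination hclosed

lemma exists_coefficients (hω : IsLieClosedOn (regularSubspace h P E) ω)
    (hα₀ : ∀ α ∈ P, ∃ a ∈ h, α a ≠ 0) :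
    ∃ μ : Dual K L → K, (∀ γ, γ ∉ P → μ γ = 0) ∧ ∀ α ∈ P, ∀ x ∈ h, ω x (E α) = μ α * α x := by
  choose! m hm using fun α hα => hE.exists_apply_root_eq_mul hω hα (hα₀ α hα)
  refine ⟨fun α => if α ∈ P then m α else 0, fun γ hγ => if_neg hγ, fun α hα x hx => ?_⟩
  simp only [if_pos hα, hm α hα x hx]

lemma apply_root_root_eq_zero (hαβ₀ : ∀ α ∈ P, ∀ β ∈ P, ∃ a ∈ h, (α + β) a ≠ 0)
    (hω : IsLieClosedOn (regularSubspace h P E) ω) (halt : ω.IsAlt)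
    (hωE : ∀ x ∈ h, ∀ α ∈ P, ω x (E α) = 0) :
    ∀ α ∈ P, ∀ β ∈ P, ω (E α) (E β) = 0 := by
  intro α hα β hβ
  obtain ⟨a, ha, hne⟩ := hαβ₀ α hα β hβ
  have hα_mem := root_mem_regularSubspace (h := h) (E := E) hα
  have hβ_mem := root_mem_regularSubspace (h := h) (E := E) hβ
  have hle : span K (E '' P) ≤ LinearMap.ker (ω a) :=
    Submodule.span_le.2 (Set.image_subset_iff.2 fun γ hγ => hωE a ha γ hγ)
  have hlie : ω a ⁅E α, E β⁆ = 0 :=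
    hle (hE.lie_mem_span (add_ne_zero_of_exists_apply_ne_zero hαβ₀) hα_mem hβ_mem)
  have hclosed := hω a (mem_regularSubspace_of_mem_cartan ha) (E α) hα_mem (E β) hβ_mem
  rw [hlie, ← lie_skew (E β) a, hE.lie_root α hα a ha, hE.lie_root β hβ a ha] at hclosed
  simp only [map_smul, map_neg, smul_eq_mul, ← halt.neg_eq (E α) (E β)] at hclosed
  refine (mul_eq_zero.1 (?_ : (α + β) a * ω (E α) (E β) = 0)).resolve_left hne
  rw [LinearMap.add_apply]
  linear_combination -hclosed

lemma exists_hasNormalForm [NeZero (2 : K)] (hα₀ : ∀ α ∈ P, ∃ a ∈ h, α a ≠ 0)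
    (hαβ₀ : ∀ α ∈ P, ∀ β ∈ P, ∃ a ∈ h, (α + β) a ≠ 0) (halt : ω.IsAlt)
    (hω : IsLieClosedOn (regularSubspace h P E) ω) :
    ∃ μ ω₀, HasNormalForm h P E N ωc ω μ ω₀ := by
  have hP := add_ne_zero_of_exists_apply_ne_zero hαβ₀
  obtain ⟨μ, hμ, hωμ⟩ := hE.exists_coefficients hω hα₀
  let p := cartanProjection P E ωc
  let η := ω - lieCoboundary (rootCovector P ωc μ)
  have hη : IsLieClosedOn (regularSubspace h P E) η := hω.sub (isLieClosedOn_lieCoboundary _ _)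
  have hη_alt : η.IsAlt := LinearMap.BilinForm.IsAlt.sub halt (lieCoboundary_isAlt _)
  have hη_root : ∀ x ∈ h, ∀ α ∈ P, η x (E α) = 0 := fun x hx α hα => by
    rw [LinearMap.sub_apply, LinearMap.sub_apply, lieCoboundary_apply,
      hE.rootCovector_lie_root μ hx hα, hωμ α hα x hx, sub_self]
  have hη_eq : ∀ x ∈ regularSubspace h P E, ∀ y ∈ regularSubspace h P E,
      η x y = ω.compl₁₂ p p x y := by
    refine eqOn_regularSubspace_of_isAlt hη_alt (fun x => halt (p x)) ?_ ?_ ?_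
    · intro x hx y hy
      simp [η, p, hE.lie_cartan x hx y hy, hE.cartanProjection_cartan hx,
        hE.cartanProjection_cartan hy]
    · intro x hx α hα
      simp [p, hη_root x hx α hα, hE.cartanProjection_root hα]
    · intro α hα β hβ
      simp [p, hE.apply_root_root_eq_zero hαβ₀ hη hη_alt hη_root α hα β hβ,
        hE.cartanProjection_root hα]
  refine ⟨μ, ω.compl₁₂ p p, hμ, fun x => halt (p x), ?_, fun x hx y hy => ?_⟩
  · rintro x y (hx | hy)
    · simp [p, hE.cartanProjection_span hx]
    · simp [p, hE.cartanProjection_span hy]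
  · rw [hE.rootForm_eq_lieCoboundary hP hμ x hx y hy, ← hη_eq x hx y hy, LinearMap.sub_apply,
      LinearMap.sub_apply, sub_add_cancel]

theorem isLieClosedOn_iff_exists_hasNormalForm [NeZero (2 : K)]
    (hα₀ : ∀ α ∈ P, ∃ a ∈ h, α a ≠ 0)
    (hαβ₀ : ∀ α ∈ P, ∀ β ∈ P, ∃ a ∈ h, (α + β) a ≠ 0) (halt : ω.IsAlt) :
    IsLieClosedOn (regularSubspace h P E) ω ↔ ∃ μ ω₀, HasNormalForm h P E N ωc ω μ ω₀ :=
  ⟨hE.exists_hasNormalForm hα₀ hαβ₀ halt, fun ⟨_, _, hω⟩ =>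
    hE.isLieClosedOn_of_hasNormalForm (add_ne_zero_of_exists_apply_ne_zero hαβ₀) hω⟩

lemma eq_cartan_of_hasNormalForm (hω : HasNormalForm h P E N ωc ω μ ω₀) {x y : L}
    (hx : x ∈ h) (hy : y ∈ h) : ω x y = ω₀ x y := by
  rw [hω.2.2.2 x (mem_regularSubspace_of_mem_cartan hx) y (mem_regularSubspace_of_mem_cartan hy),
    hE.rootForm_cartan_cartan μ hx hy, add_zero]

end IsRootVectorSystem

end NormalForm

section ImNondegenerate

variable {L : Type*} [AddCommGroup L] [Module ℂ L]

/-- Nondegeneracy of the real bilinear form `Im B` on a real subspace, given as a set `V`. -/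
def ImNondegenerateOn (V : Set L) (B : LinearMap.BilinForm ℂ L) : Prop :=
  ∀ x ∈ V, (∀ y ∈ V, (B x y).im = 0) → x = 0

lemma ImNondegenerateOn.congr {V : Set L} {B B' : LinearMap.BilinForm ℂ L}
    (hB : ImNondegenerateOn V B) (h : ∀ x ∈ V, ∀ y ∈ V, B x y = B' x y) :
    ImNondegenerateOn V B' :=
  fun x hx hxV => hB x hx fun y hy => by rw [h x hx y hy, hxV y hy]

end ImNondegenerate

section Admissible

variable {L : Type*} [LieRing L] [LieAlgebra ℂ L]

/-- A conjugation as a conjugate-linear map, so that images of subspaces are subspaces. -/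
def LieAntiInvolution.toSemilinearMap (σ : LieAntiInvolution L) : L →ₛₗ[starRingEnd ℂ] L where
  toFun := σ.toFun
  map_add' := σ.map_add'
  map_smul' := σ.map_smul'

/-- Admissibility of the pair `(k, ω)` for the real form of fixed points of `σ`. -/
def IsAdmissiblePair (σ : LieAntiInvolution L) (k : Submodule ℂ L)
    (ω : LinearMap.BilinForm ℂ L) : Prop :=
  IsLieClosedOn k ω ∧ (∀ x, ∃ a ∈ k, ∃ b ∈ k, x = a + σ.toFun b)
    ∧ ImNondegenerateOn (k ∩ Function.fixedPoints σ.toFun) ω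

@[simp]
lemma LieAntiInvolution.toSemilinearMap_apply (σ : LieAntiInvolution L) (x : L) :
    σ.toSemilinearMap x = σ.toFun x := rfl

lemma regularSubspace_sup_map_eq_top {H h₀ : Submodule ℂ L} {R P : Finset (Dual ℂ L)}
    {E : Dual ℂ L → L} {σ : LieAntiInvolution L}
    (hdecomp : H ⊔ span ℂ (E '' R) = ⊤) (htotal : ∀ α ∈ R, α ∈ P ∨ -α ∈ P)
    (hσE : ∀ α ∈ P, ∃ c : ℂ, c ≠ 0 ∧ σ.toFun (E α) = c • E (-α))
    (hHspan : ∀ x ∈ H, ∃ a ∈ h₀, ∃ b ∈ h₀, x = a + σ.toFun b) :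
    regularSubspace h₀ P E ⊔ (regularSubspace h₀ P E).map σ.toSemilinearMap = ⊤ := by
  rw [eq_top_iff, ← hdecomp]
  refine regularSubspace_le ?_ fun α hα => ?_
  · intro x hx
    obtain ⟨a, ha, b, hb, rfl⟩ := hHspan x hx
    exact Submodule.add_mem_sup (mem_regularSubspace_of_mem_cartan ha)
      (Submodule.mem_map_of_mem (mem_regularSubspace_of_mem_cartan hb))
  · rcases htotal α hα with hpos | hneg
    · exact Submodule.mem_sup_left (root_mem_regularSubspace hpos)
    · obtain ⟨c, hc, hσ⟩ := hσE (-α) hneg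
      have hEα : E α = c⁻¹ • σ.toSemilinearMap (E (-α)) := by
        rw [LieAntiInvolution.toSemilinearMap_apply, hσ, neg_neg, inv_smul_smul₀ hc]
      rw [hEα]
      exact Submodule.mem_sup_right (Submodule.smul_mem _ _
        (Submodule.mem_map_of_mem (root_mem_regularSubspace hneg)))

namespace IsRootVectorSystem

variable {H h₀ : Submodule ℂ L} {R P : Finset (Dual ℂ L)} {E : Dual ℂ L → L}
  {N : Dual ℂ L → Dual ℂ L → ℂ} {ωc : Dual ℂ L → Dual ℂ L} {σ : LieAntiInvolution L}

lemma dual_conj_eq_zero (hE : IsRootVectorSystem H R E N ωc) (hneg : ∀ α ∈ R, -α ∈ R)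
    (hPR : P ⊆ R) (hdisj : ∀ α ∈ P, -α ∉ P) (hh₀ : h₀ ≤ H) (hσH : ∀ x ∈ H, σ.toFun x ∈ H)
    (hσE : ∀ α ∈ P, ∃ c : ℂ, σ.toFun (E α) = c • E (-α))
    {α : Dual ℂ L} (hα : α ∈ P) {x : L} (hx : x ∈ regularSubspace h₀ P E) :
    ωc α (σ.toFun x) = 0 := by
  have hle : regularSubspace h₀ P E ≤ (LinearMap.ker (ωc α)).comap σ.toSemilinearMap := by
    refine regularSubspace_le
      (fun y hy => hE.dual_cartan α (hPR hα) _ (hσH y (hh₀ hy))) fun β hβ => ?_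
    obtain ⟨c, hσ⟩ := hσE β hβ
    have hne : α ≠ -β := fun h => hdisj β hβ (h ▸ hα)
    simp [hσ, hE.dual_root α (hPR hα) (-β) (hneg β (hPR hβ)), hne]
  exact hle hx

lemma regularSubspace_inter_fixedPoints (hE : IsRootVectorSystem h₀ P E N ωc)
    (hσ : ∀ α ∈ P, ∀ x ∈ regularSubspace h₀ P E, ωc α (σ.toFun x) = 0) :
    (regularSubspace h₀ P E : Set L) ∩ Function.fixedPoints σ.toFun
      = (h₀ : Set L) ∩ (σ.toFun '' h₀ ∩ Function.fixedPoints σ.toFun) := by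
  ext x
  refine ⟨fun ⟨hx, hfix⟩ => ?_, fun ⟨hx, _, hfix⟩ =>
    ⟨mem_regularSubspace_of_mem_cartan hx, hfix⟩⟩
  have hx₀ : x ∈ h₀ := hE.mem_cartan_of_dual_eq_zero hx fun α hα => by
    simpa only [Function.mem_fixedPoints_iff.1 hfix] using hσ α hα x hx
  exact ⟨hx₀, ⟨x, hx₀, hfix⟩, hfix⟩

end IsRootVectorSystem

end Admissible

theorem closed_forms_on_regular_subalgebra_inner_type_general
    {L : Type*} [LieRing L] [LieAlgebra ℂ L]
    {H h₀ : Submodule ℂ L} {R P : Finset (Dual ℂ L)} {E : Dual ℂ L → L}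
    {N : Dual ℂ L → Dual ℂ L → ℂ} {ωc : Dual ℂ L → Dual ℂ L}
    (hE : IsRootVectorSystem H R E N ωc) (hdecomp : H ⊔ span ℂ (E '' R) = ⊤)
    (hneg : ∀ α ∈ R, -α ∈ R) (hPR : P ⊆ R)
    (hclosed : ∀ α ∈ P, ∀ β ∈ P, α + β ∈ R → α + β ∈ P)
    (htotal : ∀ α ∈ R, α ∈ P ∨ -α ∈ P) (hh₀ : h₀ ≤ H)
    (hα₀ : ∀ α ∈ P, ∃ a ∈ h₀, α a ≠ 0)
    (hαβ₀ : ∀ α ∈ P, ∀ β ∈ P, ∃ a ∈ h₀, (α + β) a ≠ 0)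
    {σ : LieAntiInvolution L} (hσH : ∀ x ∈ H, σ.toFun x ∈ H)
    (hσE : ∀ α ∈ R, ∃ c : ℂ, c ≠ 0 ∧ σ.toFun (E α) = c • E (-α))
    (hHspan : ∀ x ∈ H, ∃ a ∈ h₀, ∃ b ∈ h₀, x = a + σ.toFun b)
    {ω : LinearMap.BilinForm ℂ L} (halt : ω.IsAlt) :
    (IsLieClosedOn (regularSubspace h₀ P E) ω ↔ ∃ μ ω₀, HasNormalForm h₀ P E N ωc ω μ ω₀) ∧
    (IsAdmissiblePair σ (regularSubspace h₀ P E) ω ↔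
      ∃ μ ω₀, HasNormalForm h₀ P E N ωc ω μ ω₀ ∧
        ImNondegenerateOn (h₀ ∩ (σ.toFun '' h₀ ∩ Function.fixedPoints σ.toFun)) ω₀) := by
  have hE₀ := hE.restrict hh₀ hPR hclosed
  have hσP := fun α hα => hσE α (hPR hα)
  have hdisj : ∀ α ∈ P, -α ∉ P := fun α hα hα' =>
    add_ne_zero_of_exists_apply_ne_zero hαβ₀ α hα _ hα' (add_neg_cancel α)
  have hiff := hE₀.isLieClosedOn_iff_exists_hasNormalForm hα₀ hαβ₀ halt
  have hspan := regularSubspace_sup_map_eq_top hdecomp htotal hσP hHspan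
  have hreal := hE₀.regularSubspace_inter_fixedPoints fun α hα x hx =>
    hE.dual_conj_eq_zero hneg hPR hdisj hh₀ hσH (fun β hβ => (hσP β hβ).imp fun _ h => h.2) hα hx
  refine ⟨hiff, fun ⟨hω, _, hnd⟩ => ?_, fun ⟨μ, ω₀, hform, hnd⟩ =>
    ⟨hiff.2 ⟨μ, ω₀, hform⟩, ?_, ?_⟩⟩
  · obtain ⟨μ, ω₀, hform⟩ := hiff.1 hω
    rw [hreal] at hnd
    exact ⟨μ, ω₀, hform, hnd.congr fun x hx y hy =>
      hE₀.eq_cartan_of_hasNormalForm hform hx.1 hy.1⟩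
  · intro x
    obtain ⟨a, ha, _, ⟨b, hb, rfl⟩, hx⟩ := Submodule.mem_sup.1 (hspan ▸ Submodule.mem_top (x := x))
    exact ⟨a, ha, b, hb, hx.symm⟩
  · rw [hreal]
    exact hnd.congr fun x hx y hy => (hE₀.eq_cartan_of_hasNormalForm hform hx.1 hy.1).symm

/-- **Theorem `main`.**  Let `gC` be a finite-dimensional complex
semisimple Lie algebra with Cartan subalgebra `H`, root system `R`, Weyl basis
`{E α}` with structure constants `N`, dual covectors `ωc α`, a positive system
`Rpos ⊆ R` and a subspace `h₀ ⊆ H` on which all `α` and `α + β` (`α, β ∈ Rpos`)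
are not identically zero, and let `k = h₀ ⊕ g(Rpos)`.  Then a 2-form `ω` on `k` is
closed iff `ω = ω̂₀ + ∑ μ_α α∧ω_α + (1/2)∑ μ_{α+β} N_{αβ} ω_α∧ω_β` on `k`, for
constants `μ` and a 2-form `ω̂₀` on `h₀` trivially extended to `k`.  Moreover, if
`σ` is a conjugation of `gC` with `σ(α) = -α` on `R` and `h₀ + σ(h₀) = H`, with real
form `g`, then `(k, ω)` is a `g`-admissible pair iff in addition `Im ω̂₀` is
nondegenerate on `l := h₀ ∩ σ(h₀) ∩ g`. -/
theorem closed_forms_on_regular_subalgebra_inner_type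
    {gC : Type*} [LieRing gC] [LieAlgebra ℂ gC] [FiniteDimensional ℂ gC]
    [LieAlgebra.IsSemisimple ℂ gC]
    (H : LieSubalgebra ℂ gC) [H.IsCartanSubalgebra]
    (R : Finset (Module.Dual ℂ gC))
    (E : Module.Dual ℂ gC → gC)
    (N : Module.Dual ℂ gC → Module.Dual ℂ gC → ℝ)
    (ωc : Module.Dual ℂ gC → Module.Dual ℂ gC)
    -- properties of the root space decomposition and the Weyl basis
    (habel : ∀ x ∈ H, ∀ y ∈ H, ⁅x, y⁆ = (0 : gC))
    (hRne : ∀ α ∈ R, α ≠ (0 : Module.Dual ℂ gC))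
    (hRneg : ∀ α ∈ R, -α ∈ R)
    (hEne : ∀ α ∈ R, E α ≠ 0)
    (hroot : ∀ α ∈ R, ∀ x ∈ H, ⁅x, E α⁆ = α x • E α)
    (hαE : ∀ α ∈ R, ∀ β ∈ R, α (E β) = 0)
    (hbracket : ∀ α ∈ R, ∀ β ∈ R, α + β ∈ R → ⁅E α, E β⁆ = (N α β : ℂ) • E (α + β))
    (hbracket0 : ∀ α ∈ R, ∀ β ∈ R, α + β ≠ 0 → α + β ∉ R → ⁅E α, E β⁆ = 0)
    (hcoroot : ∀ α ∈ R, ⁅E α, E (-α)⁆ ∈ H)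
    (hN0 : ∀ α β, α + β ∉ R → N α β = 0)
    (hNneg : ∀ α β, N (-α) (-β) = - N α β)
    (hindep : LinearIndependent ℂ (fun α : {x : Module.Dual ℂ gC // x ∈ R} => E ↑α))
    (hdisj : Disjoint H.toSubmodule (Submodule.span ℂ (E '' ↑R)))
    (hdecomp : H.toSubmodule ⊔ Submodule.span ℂ (E '' ↑R) = ⊤)
    (hωcH : ∀ α ∈ R, ∀ x ∈ H, ωc α x = 0)
    (hωcE : ∀ α ∈ R, ∀ β ∈ R, ωc α (E β) = if α = β then 1 else 0)
    -- the positive root system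
    (Rpos : Finset (Module.Dual ℂ gC))
    (hRposR : Rpos ⊆ R)
    (hRposClosed : ∀ α ∈ Rpos, ∀ β ∈ Rpos, α + β ∈ R → α + β ∈ Rpos)
    (hRposTotal : ∀ α ∈ R, α ∈ Rpos ∨ -α ∈ Rpos)
    (hRposDisj : ∀ α ∈ Rpos, -α ∉ Rpos)
    -- the Cartan part `h₀ ⊆ H` of `k`
    (h₀ : Submodule ℂ gC) (hh₀ : h₀ ≤ H.toSubmodule)
    (hα_h₀ : ∀ α ∈ Rpos, ∃ x ∈ h₀, α x ≠ 0)
    (hαβ_h₀ : ∀ α ∈ Rpos, ∀ β ∈ Rpos, ∃ x ∈ h₀, (α + β) x ≠ 0)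
    -- the regular subalgebra `k = h₀ + g(Rpos)`
    (k : Submodule ℂ gC)
    (hk : k = h₀ ⊔ Submodule.span ℂ (E '' ↑Rpos))
    -- the conjugation defining a real form of inner type, with maximally compact
    -- Cartan subalgebra: `σ(α) = -α` for all roots `α`
    (σ : LieAntiInvolution gC)
    (hσH : ∀ x ∈ H, σ.toFun x ∈ H)
    (hσα : ∀ α ∈ R, σ.dualConj α = -α)
    (hσE : ∀ α ∈ R, ∃ c : ℂ, c ≠ 0 ∧ σ.toFun (E α) = c • E (-α))
    (hHspan : ∀ x ∈ H, ∃ a ∈ h₀, ∃ b ∈ h₀, x = a + σ.toFun b)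
    -- the 2-form `ω` on `k`
    (ω : gC →ₗ[ℂ] gC →ₗ[ℂ] ℂ)
    (halt : ∀ x : gC, ω x x = 0) :
    -- first claim: `ω` is closed on `k` iff it has the canonical form
    ((∀ x ∈ k, ∀ y ∈ k, ∀ z ∈ k, ω x ⁅y, z⁆ + ω z ⁅x, y⁆ + ω y ⁅z, x⁆ = 0)
      ↔ ∃ (μ : Module.Dual ℂ gC → ℂ) (ω₀ : gC →ₗ[ℂ] gC →ₗ[ℂ] ℂ),
          (∀ γ, γ ∉ Rpos → μ γ = 0)
          ∧ (∀ x : gC, ω₀ x x = 0)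
          ∧ (∀ x y : gC, x ∈ Submodule.span ℂ (E '' ↑Rpos) ∨
                y ∈ Submodule.span ℂ (E '' ↑Rpos) → ω₀ x y = 0)
          ∧ (∀ x ∈ k, ∀ y ∈ k, ω x y = ω₀ x y
              + ∑ α ∈ Rpos, μ α * (α x * ωc α y - α y * ωc α x)
              + (1/2) * ∑ α ∈ Rpos, ∑ β ∈ Rpos,
                  μ (α + β) * (N α β : ℂ) * (ωc α x * ωc β y - ωc α y * ωc β x)))
    ∧
    -- second claim: `(k, ω)` is a `g`-admissible pair iff in addition `Im ω̂₀`
    -- is nondegenerate on `l = h₀ ∩ σ(h₀) ∩ g`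
    (((∀ x ∈ k, ∀ y ∈ k, ∀ z ∈ k, ω x ⁅y, z⁆ + ω z ⁅x, y⁆ + ω y ⁅z, x⁆ = 0)
        ∧ (∀ x : gC, ∃ a ∈ k, ∃ b ∈ k, x = a + σ.toFun b)
        ∧ (∀ x ∈ k, σ.toFun x = x →
            (∀ y ∈ k, σ.toFun y = y → (ω x y).im = 0) → x = 0))
      ↔ ∃ (μ : Module.Dual ℂ gC → ℂ) (ω₀ : gC →ₗ[ℂ] gC →ₗ[ℂ] ℂ),
          (∀ γ, γ ∉ Rpos → μ γ = 0)
          ∧ (∀ x : gC, ω₀ x x = 0)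
          ∧ (∀ x y : gC, x ∈ Submodule.span ℂ (E '' ↑Rpos) ∨
                y ∈ Submodule.span ℂ (E '' ↑Rpos) → ω₀ x y = 0)
          ∧ (∀ x ∈ k, ∀ y ∈ k, ω x y = ω₀ x y
              + ∑ α ∈ Rpos, μ α * (α x * ωc α y - α y * ωc α x)
              + (1/2) * ∑ α ∈ Rpos, ∑ β ∈ Rpos,
                  μ (α + β) * (N α β : ℂ) * (ωc α x * ωc β y - ωc α y * ωc β x))
          ∧ (∀ x ∈ h₀, x ∈ σ.toFun '' (h₀ : Set gC) → σ.toFun x = x →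
              (∀ y ∈ h₀, y ∈ σ.toFun '' (h₀ : Set gC) → σ.toFun y = y →
                (ω₀ x y).im = 0) → x = 0)) := by
  subst hk
  simpa only [IsAdmissiblePair, IsLieClosedOn, HasNormalForm, ImNondegenerateOn, rootForm_apply,
    Set.mem_inter_iff, SetLike.mem_coe, Function.mem_fixedPoints_iff, and_imp, and_assoc,
    ← add_assoc, regularSubspace] using
    closed_forms_on_regular_subalgebra_inner_type_general
      (N := fun α β => (N α β : ℂ)) (H := H.toSubmodule)
      ⟨habel, hroot, hαE, hbracket, hbracket0, hωcH, hωcE⟩ hdecomp hRneg hRposR hRposClosed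
      hRposTotal hh₀ hα_h₀ hαβ_h₀ hσH hσE hHspan halt
end

section
/- Let n ≥ 3 and let R = {±ε_i ± ε_j : 1 ≤ i < j ≤ n} be the root system of so_{2n}(ℂ) in the dual of its diagonal Cartan subalgebra. Let σ be the involution acting on R induced by the linear map with σ(ε_i) = −ε_i for i < n and σ(ε_n) = ε_n. Call two subsets of R equivalent if one is carried to the other by a composition of the transformations R₀ ↦ −R₀, R₀ ↦ σ(R₀), and R₀ ↦ w(R₀) for elements w of the Weyl group of D_n (signed permutations of ε_1,…,ε_n with an even number of sign changes) commuting with σ. Then every σ-positive system R₀ ⊆ R is equivalent to one of: (a) R⁺ := {ε_i ± ε_j : 1 ≤ i < j ≤ n}; (b) (R⁺ ∖ {ε_{n−1} + ε_n}) ∪ {ε_n − ε_{n−1}}; (c) (R⁺ ∖ {ε_{n−1} − ε_n}) ∪ {−(ε_{n−1} + ε_n)}. -/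
namespace SOSigmaPositive

open Finset

/-- The coordinate functionals `ε_i`, realized as integer vectors. -/
def eps {n : ℕ} (i : Fin n) : Fin n → ℤ := Pi.single i 1

/-- The root system of `so_{2n}(ℂ)`: `R = {±ε_i ± ε_j : i ≠ j}`. -/
def Roots (n : ℕ) : Set (Fin n → ℤ) :=
  {v | ∃ i j : Fin n, i ≠ j ∧
    (v = eps i + eps j ∨ v = eps i - eps j ∨ v = -eps i - eps j)}

/-- The involution `σ` with `σ(ε_i) = -ε_i` for `i < n` and `σ(ε_n) = ε_n`
(last index fixed). -/
def sigma {m : ℕ} (v : Fin (m + 3) → ℤ) : Fin (m + 3) → ℤ :=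
  fun j => if j = Fin.last (m + 2) then v j else -v j

/-- The action of a signed permutation (a permutation `p` together with signs `s`):
`ε_i ↦ s_{p i} ε_{p i}`. -/
def signedPermAct {n : ℕ} (p : Equiv.Perm (Fin n)) (s : Fin n → ℤ)
    (v : Fin n → ℤ) : Fin n → ℤ :=
  fun j => s j * v (p.symm j)

/-- A `σ`-positive system: a closed subset `R₀ ⊆ R` with `R₀ ∪ σ(R₀) = R` and
`R₀ ∩ σ(R₀) = ∅`. -/
def IsSigmaPositive {m : ℕ} (R₀ : Set (Fin (m + 3) → ℤ)) : Prop :=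
  R₀ ⊆ Roots (m + 3)
  ∧ (∀ α ∈ R₀, ∀ β ∈ R₀, α + β ∈ Roots (m + 3) → α + β ∈ R₀)
  ∧ R₀ ∪ sigma '' R₀ = Roots (m + 3)
  ∧ R₀ ∩ sigma '' R₀ = ∅

/-- Two subsets of `R` are equivalent if one is carried to the other by a composition
of the transformations `R₀ ↦ -R₀`, `R₀ ↦ σ(R₀)` and `R₀ ↦ w(R₀)` for elements `w` of
the Weyl group of `D_n` (signed permutations with an even number of sign changes)
commuting with `σ`. -/
def Equivalent {m : ℕ} (R₀ R₁ : Set (Fin (m + 3) → ℤ)) : Prop :=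
  ∃ (s₁ s₂ : Bool) (p : Equiv.Perm (Fin (m + 3))) (s : Fin (m + 3) → ℤ),
    (∀ i, s i = 1 ∨ s i = -1)
    ∧ (∏ i, s i) = 1
    ∧ (∀ v, signedPermAct p s (sigma v) = sigma (signedPermAct p s v))
    ∧ R₁ = (fun v => if s₁ then -v else v) ''
        ((fun v => if s₂ then sigma v else v) '' (signedPermAct p s '' R₀))

/-- The positive system `R⁺ = {ε_i ± ε_j : i < j}`. -/
def Rplus (n : ℕ) : Set (Fin n → ℤ) :=
  {v | ∃ i j : Fin n, i < j ∧ (v = eps i + eps j ∨ v = eps i - eps j)}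

/-- System (b): `(R⁺ ∖ {ε_{n-1} + ε_n}) ∪ {ε_n − ε_{n-1}}`. -/
def typeB (m : ℕ) : Set (Fin (m + 3) → ℤ) :=
  (Rplus (m + 3) \ {eps ⟨m + 1, by omega⟩ + eps (Fin.last (m + 2))})
    ∪ {eps (Fin.last (m + 2)) - eps ⟨m + 1, by omega⟩}

/-- System (c): `(R⁺ ∖ {ε_{n-1} − ε_n}) ∪ {−(ε_{n-1} + ε_n)}`. -/
def typeC (m : ℕ) : Set (Fin (m + 3) → ℤ) :=
  (Rplus (m + 3) \ {eps ⟨m + 1, by omega⟩ - eps (Fin.last (m + 2))})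
    ∪ {-(eps ⟨m + 1, by omega⟩ + eps (Fin.last (m + 2)))}

/-!
For a root `v`, exactly one of `v` and `σ v` lies in a `σ`-positive system. In particular, for
`i < n` exactly one of `±ε_i + ε_n` does, and sign changes make it `ε_i + ε_n`. Then
`ε_i - ε_j ∈ R₀` is a strict total order on the indices below `n`, and sorting them gives
`ε_i - ε_j ∈ R₀` for `i < j < n`. For a system normalized in this way, closedness forces every root
of `R⁺` to be in `R₀`, with the possible exception of `v = ε_{n-1} - ε_n`; hence `R₀` is `R⁺` or
`(R⁺ \ {v}) ∪ {σ v}`, which is (c).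

The parity of the number of sign changes is immaterial: `-σ` changes the sign of `ε_n` only.
It also exchanges (b) and (c), so that (b) is never required.
-/

theorem exists_equiv_fin_lt_iff {α : Type*} [Fintype α] {n : ℕ} (hn : Fintype.card α = n)
    (r : α → α → Prop) [IsStrictTotalOrder α r] :
    ∃ e : α ≃ Fin n, ∀ a b, e a < e b ↔ r a b := by
  classical
  let := linearOrderOfSTO r
  exact ⟨(monoEquivOfFin α hn).symm.toEquiv, fun _ _ => (monoEquivOfFin α hn).symm.lt_iff_lt⟩

section Roots

variable {n : ℕ} {i j : Fin n} {v : Fin n → ℤ}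

theorem eps_add_eps_mem_Roots (h : i ≠ j) : eps i + eps j ∈ Roots n :=
  ⟨i, j, h, Or.inl rfl⟩

theorem eps_sub_eps_mem_Roots (h : i ≠ j) : eps i - eps j ∈ Roots n :=
  ⟨i, j, h, Or.inr (Or.inl rfl)⟩

theorem mem_Roots_iff_exists_units_smul :
    v ∈ Roots n ↔ ∃ i j, i ≠ j ∧ ∃ x y : ℤˣ, v = x • eps i + y • eps j := by
  constructor
  · rintro ⟨i, j, hij, rfl | rfl | rfl⟩
    · exact ⟨i, j, hij, 1, 1, by simp⟩
    · exact ⟨i, j, hij, 1, -1, by simp [sub_eq_add_neg]⟩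
    · exact ⟨i, j, hij, -1, -1, by simp [sub_eq_add_neg]⟩
  · rintro ⟨i, j, hij, x, y, rfl⟩
    rcases Int.units_eq_one_or x with rfl | rfl <;> rcases Int.units_eq_one_or y with rfl | rfl
    · simpa using eps_add_eps_mem_Roots hij
    · simpa [sub_eq_add_neg] using eps_sub_eps_mem_Roots hij
    · simpa [sub_eq_neg_add] using eps_sub_eps_mem_Roots hij.symm
    · exact ⟨i, j, hij, Or.inr (Or.inr (by simp [sub_eq_add_neg]))⟩

theorem mem_Rplus_or_neg_mem_Rplus (hv : v ∈ Roots n) : v ∈ Rplus n ∨ -v ∈ Rplus n := by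
  obtain ⟨i, j, hij, rfl | rfl | rfl⟩ := hv <;> rcases hij.lt_or_gt with h | h
  · exact Or.inl ⟨i, j, h, Or.inl rfl⟩
  · exact Or.inl ⟨j, i, h, Or.inl (add_comm _ _)⟩
  · exact Or.inl ⟨i, j, h, Or.inr rfl⟩
  · exact Or.inr ⟨j, i, h, Or.inr (neg_sub _ _)⟩
  · exact Or.inr ⟨i, j, h, Or.inl (by abel)⟩
  · exact Or.inr ⟨j, i, h, Or.inl (by abel)⟩

end Roots

section Sigma

variable {m : ℕ} {i j : Fin (m + 3)} (u v : Fin (m + 3) → ℤ)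

@[simp]
theorem sigma_sigma : sigma (sigma v) = v := by
  funext l
  by_cases hl : l = Fin.last (m + 2) <;> simp [sigma, hl]

@[simp]
theorem sigma_neg : sigma (-v) = -sigma v := by
  funext l
  by_cases hl : l = Fin.last (m + 2) <;> simp [sigma, hl]

@[simp]
theorem sigma_add : sigma (u + v) = sigma u + sigma v := by
  funext l
  by_cases hl : l = Fin.last (m + 2) <;> simp [sigma, hl, add_comm]

@[simp]
theorem sigma_sub : sigma (u - v) = sigma u - sigma v := by
  simp [sub_eq_add_neg]

@[simp]
theorem sigma_eps_last : sigma (eps (Fin.last (m + 2))) = eps (Fin.last (m + 2)) := by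
  funext l
  by_cases hl : l = Fin.last (m + 2) <;> simp [sigma, eps, hl]

@[simp]
theorem sigma_eps_of_ne_last (hi : i ≠ Fin.last (m + 2)) : sigma (eps i) = -eps i := by
  funext l
  by_cases hl : l = Fin.last (m + 2) <;> simp [sigma, eps, hl, hi.symm]

theorem sigma_eps_sub_eps (hi : i ≠ Fin.last (m + 2)) (hj : j ≠ Fin.last (m + 2)) :
    sigma (eps i - eps j) = eps j - eps i := by
  rw [sigma_sub, sigma_eps_of_ne_last hi, sigma_eps_of_ne_last hj]
  abel

variable {v}

theorem neg_sigma_mem_Rplus (hv : v ∈ Rplus (m + 3)) : -sigma v ∈ Rplus (m + 3) := by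
  obtain ⟨i, j, hij, hv⟩ := hv
  have hi : i ≠ Fin.last (m + 2) := Fin.ne_last_of_lt hij
  refine ⟨i, j, hij, ?_⟩
  by_cases hj : j = Fin.last (m + 2)
  · subst hj
    rcases hv with rfl | rfl
    · exact Or.inr (by rw [sigma_add, sigma_eps_of_ne_last hi, sigma_eps_last]; abel)
    · exact Or.inl (by rw [sigma_sub, sigma_eps_of_ne_last hi, sigma_eps_last]; abel)
  · rcases hv with rfl | rfl
    · exact Or.inl (by rw [sigma_add, sigma_eps_of_ne_last hi, sigma_eps_of_ne_last hj]; abel)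
    · exact Or.inr (by rw [sigma_eps_sub_eps hi hj, neg_sub])

theorem mem_Rplus_or_sigma_mem_Rplus (hv : v ∈ Roots (m + 3)) :
    v ∈ Rplus (m + 3) ∨ sigma v ∈ Rplus (m + 3) :=
  (mem_Rplus_or_neg_mem_Rplus hv).imp_right fun h => by simpa using neg_sigma_mem_Rplus h

end Sigma

/-- The signed permutation `ε_i ↦ s_{p i} ε_{p i}` as an automorphism of the lattice `ℤⁿ`. Signs are
units of `ℤ`, so that they need no side condition. -/
def signedPerm {n : ℕ} (p : Equiv.Perm (Fin n)) (s : Fin n → ℤˣ) :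
    (Fin n → ℤ) ≃+ (Fin n → ℤ) where
  toFun := signedPermAct p fun i => s i
  invFun := signedPermAct p.symm fun i => s (p i)
  left_inv v := by
    funext l
    simp [signedPermAct, ← mul_assoc, ← Units.val_mul]
  right_inv v := by
    funext l
    simp [signedPermAct, ← mul_assoc, ← Units.val_mul]
  map_add' u v := by
    funext l
    simp [signedPermAct, mul_add]

section SignedPerm

variable {n : ℕ} (p q : Equiv.Perm (Fin n)) (s t : Fin n → ℤˣ)

theorem signedPerm_apply (v : Fin n → ℤ) (l : Fin n) :
    signedPerm p s v l = s l * v (p.symm l) :=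
  rfl

theorem signedPerm_symm :
    (signedPerm p s).symm = signedPerm p.symm (s ∘ p) := by
  ext
  rfl

theorem signedPerm_signedPerm (v : Fin n → ℤ) :
    signedPerm q t (signedPerm p s v) = signedPerm (q * p) (t * s ∘ q.symm) v := by
  funext l
  simp [signedPerm_apply, mul_assoc, Equiv.Perm.mul_def]

theorem signedPerm_eps (i : Fin n) : signedPerm p s (eps i) = s (p i) • eps (p i) := by
  funext l
  by_cases hl : l = p i
  · simp [hl, signedPerm_apply, eps, Units.smul_def]
  · simp [hl, signedPerm_apply, eps, Equiv.symm_apply_eq]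

theorem signedPerm_mem_Roots {v : Fin n → ℤ} (hv : v ∈ Roots n) : signedPerm p s v ∈ Roots n := by
  obtain ⟨i, j, hij, x, y, rfl⟩ := mem_Roots_iff_exists_units_smul.1 hv
  refine mem_Roots_iff_exists_units_smul.2
    ⟨p i, p j, p.injective.ne hij, x * s (p i), y * s (p j), ?_⟩
  simp only [map_add, map_zsmul_unit, signedPerm_eps, mul_smul]

theorem signedPerm_mem_Roots_iff {v : Fin n → ℤ} : signedPerm p s v ∈ Roots n ↔ v ∈ Roots n := by
  refine ⟨fun h => ?_, signedPerm_mem_Roots p s⟩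
  rw [← (signedPerm p s).symm_apply_apply v, signedPerm_symm]
  exact signedPerm_mem_Roots _ _ h

end SignedPerm

theorem signedPerm_sigma {m : ℕ} {p : Equiv.Perm (Fin (m + 3))}
    (hp : p (Fin.last (m + 2)) = Fin.last (m + 2)) (s : Fin (m + 3) → ℤˣ)
    (v : Fin (m + 3) → ℤ) : signedPerm p s (sigma v) = sigma (signedPerm p s v) := by
  funext l
  have hl : p.symm l = Fin.last (m + 2) ↔ l = Fin.last (m + 2) := by
    rw [Equiv.symm_apply_eq, hp]
  simp only [signedPerm_apply, sigma, hl, mul_ite, mul_neg]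

theorem neg_sigma_signedPerm {m : ℕ} (p : Equiv.Perm (Fin (m + 3))) (s : Fin (m + 3) → ℤˣ)
    (v : Fin (m + 3) → ℤ) :
    -sigma (signedPerm p s v) = signedPerm p (s * Pi.mulSingle (Fin.last (m + 2)) (-1)) v := by
  funext l
  by_cases h : l = Fin.last (m + 2) <;> simp [signedPerm_apply, sigma, h]

theorem equivalent_image_signedPerm {m : ℕ} {p : Equiv.Perm (Fin (m + 3))}
    (hp : p (Fin.last (m + 2)) = Fin.last (m + 2)) (s : Fin (m + 3) → ℤˣ)
    (R : Set (Fin (m + 3) → ℤ)) : Equivalent R (signedPerm p s '' R) := by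
  have val_eq (t : Fin (m + 3) → ℤˣ) (i) : (t i : ℤ) = 1 ∨ (t i : ℤ) = -1 :=
    Int.isUnit_iff.1 (t i).isUnit
  rcases Int.units_eq_one_or (∏ i, s i) with hs | hs
  · refine ⟨false, false, p, fun i => s i, val_eq s, ?_, signedPerm_sigma hp s, ?_⟩
    · simpa using congrArg Units.val hs
    · simp [signedPerm]
  · set t := s * Pi.mulSingle (Fin.last (m + 2)) (-1) with ht
    have ht_prod : ∏ i, t i = 1 := by
      simp [ht, Finset.prod_mul_distrib, hs]
    have neg_sigma_t (v) : -sigma (signedPerm p t v) = signedPerm p s v := by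
      rw [neg_sigma_signedPerm, ht, mul_assoc, ← Pi.mulSingle_mul]
      simp
    refine ⟨true, true, p, fun i => t i, val_eq t, ?_, signedPerm_sigma hp t, ?_⟩
    · simpa using congrArg Units.val ht_prod
    · simp only [if_true, Set.image_image]
      exact Set.image_congr fun v _ => (neg_sigma_t v).symm

namespace IsSigmaPositive

variable {m : ℕ} {R T : Set (Fin (m + 3) → ℤ)} {i j k : Fin (m + 3)} {u v : Fin (m + 3) → ℤ}

theorem add_mem (hR : IsSigmaPositive R) (hu : u ∈ R) (hv : v ∈ R)
    (huv : u + v ∈ Roots (m + 3)) : u + v ∈ R :=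
  hR.2.1 u hu v hv huv

theorem mem_or_sigma_mem (hR : IsSigmaPositive R) (hv : v ∈ Roots (m + 3)) :
    v ∈ R ∨ sigma v ∈ R := by
  rw [← hR.2.2.1] at hv
  rcases hv with h | ⟨u, hu, rfl⟩
  · exact Or.inl h
  · exact Or.inr (by rwa [sigma_sigma])

theorem sigma_notMem (hR : IsSigmaPositive R) (hv : v ∈ R) : sigma v ∉ R := fun h =>
  (Set.eq_empty_iff_forall_notMem.1 hR.2.2.2) v ⟨hv, sigma v, h, sigma_sigma v⟩

theorem eq_of_subset (hR : IsSigmaPositive R) (hTR : T ⊆ R)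
    (hT : ∀ v ∈ Roots (m + 3), v ∈ T ∨ sigma v ∈ T) : R = T :=
  Set.Subset.antisymm
    (fun v hv => (hT v (hR.1 hv)).resolve_right fun h => hR.sigma_notMem hv (hTR h)) hTR

theorem image (hR : IsSigmaPositive R) (f : (Fin (m + 3) → ℤ) ≃+ (Fin (m + 3) → ℤ))
    (hf : ∀ v, f v ∈ Roots (m + 3) ↔ v ∈ Roots (m + 3))
    (hσ : ∀ v, f (sigma v) = sigma (f v)) : IsSigmaPositive (f '' R) := by
  have sigma_image : sigma '' (f '' R) = f '' (sigma '' R) := by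
    simp only [Set.image_image, hσ]
  refine ⟨?_, ?_, ?_, ?_⟩
  · rintro _ ⟨v, hv, rfl⟩
    exact (hf v).2 (hR.1 hv)
  · rintro _ ⟨u, hu, rfl⟩ _ ⟨v, hv, rfl⟩ huv
    rw [← map_add, hf] at huv
    exact ⟨u + v, hR.add_mem hu hv huv, map_add f u v⟩
  · rw [sigma_image, ← Set.image_union, hR.2.2.1]
    refine Set.Subset.antisymm (Set.image_subset_iff.2 fun v => (hf v).2) fun v hv => ?_
    exact ⟨f.symm v, (hf _).1 (by rwa [f.apply_symm_apply]), f.apply_symm_apply v⟩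
  · rw [sigma_image, ← Set.image_inter f.injective, hR.2.2.2, Set.image_empty]

theorem image_signedPerm (hR : IsSigmaPositive R) {p : Equiv.Perm (Fin (m + 3))}
    (hp : p (Fin.last (m + 2)) = Fin.last (m + 2)) (s : Fin (m + 3) → ℤˣ) :
    IsSigmaPositive (signedPerm p s '' R) :=
  hR.image _ (fun _ => signedPerm_mem_Roots_iff p s) (signedPerm_sigma hp s)

theorem eps_sub_eps_notMem (hR : IsSigmaPositive R) (hi : i ≠ Fin.last (m + 2))
    (hj : j ≠ Fin.last (m + 2)) (hij : eps i - eps j ∈ R) : eps j - eps i ∉ R := by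
  rw [← sigma_eps_sub_eps hi hj]
  exact hR.sigma_notMem hij

theorem eps_sub_eps_mem_or (hR : IsSigmaPositive R) (hi : i ≠ Fin.last (m + 2))
    (hj : j ≠ Fin.last (m + 2)) (hij : i ≠ j) : eps i - eps j ∈ R ∨ eps j - eps i ∈ R := by
  rw [← sigma_eps_sub_eps hi hj]
  exact hR.mem_or_sigma_mem (eps_sub_eps_mem_Roots hij)

theorem eps_sub_eps_trans (hR : IsSigmaPositive R) (hi : i ≠ Fin.last (m + 2))
    (hj : j ≠ Fin.last (m + 2)) (hij : eps i - eps j ∈ R) (hjk : eps j - eps k ∈ R) :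
    eps i - eps k ∈ R := by
  have hik : i ≠ k := by
    rintro rfl
    exact hR.eps_sub_eps_notMem hi hj hij hjk
  rw [← sub_add_sub_cancel (eps i) (eps j)]
  exact hR.add_mem hij hjk (by simpa using eps_sub_eps_mem_Roots hik)

theorem exists_signs (hR : IsSigmaPositive R) :
    ∃ s : Fin (m + 3) → ℤˣ, ∀ i ≠ Fin.last (m + 2),
      eps i + eps (Fin.last (m + 2)) ∈ signedPerm 1 s '' R := by
  have exists_sign (i) : ∃ x : ℤˣ, (i = Fin.last (m + 2) → x = 1) ∧
      (i ≠ Fin.last (m + 2) → x • eps i + eps (Fin.last (m + 2)) ∈ R) := by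
    by_cases hi : i = Fin.last (m + 2)
    · exact ⟨1, fun _ => rfl, absurd hi⟩
    · rcases hR.mem_or_sigma_mem (eps_add_eps_mem_Roots hi) with h | h
      · exact ⟨1, fun _ => rfl, fun _ => by simpa using h⟩
      · exact ⟨-1, fun h => absurd h hi, fun _ => by simpa [hi] using h⟩
  choose s hs_last hs using exists_sign
  refine ⟨s, fun i hi => ⟨_, hs i hi, ?_⟩⟩
  simp [signedPerm_eps, smul_smul, hs_last _ rfl]

end IsSigmaPositive

/-- The order in which the indices are to be sorted: `i` precedes `j` if `ε_i - ε_j ∈ R`, except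
that the last index is placed after all the others whatever `R` is. -/
def Precedes {m : ℕ} (R : Set (Fin (m + 3) → ℤ)) (i j : Fin (m + 3)) : Prop :=
  i ≠ Fin.last (m + 2) ∧ (j = Fin.last (m + 2) ∨ eps i - eps j ∈ R)

theorem IsSigmaPositive.isStrictTotalOrder_precedes {m : ℕ} {R : Set (Fin (m + 3) → ℤ)}
    (hR : IsSigmaPositive R) : IsStrictTotalOrder (Fin (m + 3)) (Precedes R) where
  irrefl := by
    rintro i ⟨hi, h | h⟩
    · exact hi h
    · exact hR.eps_sub_eps_notMem hi hi h h
  trans := by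
    rintro i j k ⟨hi, hij⟩ ⟨hj, hjk⟩
    exact ⟨hi, hjk.imp_right (hR.eps_sub_eps_trans hi hj (hij.resolve_left hj))⟩
  trichotomous i j hij hji := by
    by_contra hne
    by_cases hi : i = Fin.last (m + 2)
    · exact hji ⟨fun hj => hne (hi.trans hj.symm), Or.inl hi⟩
    by_cases hj : j = Fin.last (m + 2)
    · exact hij ⟨hi, Or.inl hj⟩
    rcases hR.eps_sub_eps_mem_or hi hj hne with h | h
    · exact hij ⟨hi, Or.inr h⟩
    · exact hji ⟨hj, Or.inr h⟩

/-- A set of roots whose signs and order have been normalized: it contains `ε_i + ε_n` for all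
`i < n`, and `ε_i - ε_j` for all `i < j < n`. -/
structure IsNormalized {m : ℕ} (R : Set (Fin (m + 3) → ℤ)) : Prop where
  eps_add_eps_last_mem : ∀ i ≠ Fin.last (m + 2), eps i + eps (Fin.last (m + 2)) ∈ R
  eps_sub_eps_mem : ∀ i j, i < j → j ≠ Fin.last (m + 2) → eps i - eps j ∈ R

theorem IsSigmaPositive.exists_perm_isNormalized {m : ℕ} {R : Set (Fin (m + 3) → ℤ)}
    (hR : IsSigmaPositive R)
    (hadd : ∀ i ≠ Fin.last (m + 2), eps i + eps (Fin.last (m + 2)) ∈ R) :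
    ∃ p : Equiv.Perm (Fin (m + 3)), p (Fin.last (m + 2)) = Fin.last (m + 2) ∧
      IsNormalized (signedPerm p 1 '' R) := by
  have := hR.isStrictTotalOrder_precedes
  obtain ⟨p, hp⟩ := exists_equiv_fin_lt_iff (Fintype.card_fin (m + 3)) (Precedes R)
  have hp_last : p (Fin.last (m + 2)) = Fin.last (m + 2) := by
    by_contra h
    have hne : p.symm (Fin.last (m + 2)) ≠ Fin.last (m + 2) := fun h' =>
      h (p.symm_apply_eq.1 h').symm
    have := (hp _ _).2 ⟨hne, Or.inl rfl⟩
    exact (Fin.le_last _).not_gt (by simpa using this)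
  have symm_ne_last {i} (hi : i ≠ Fin.last (m + 2)) : p.symm i ≠ Fin.last (m + 2) := fun h =>
    hi (by rw [← hp_last, ← h, p.apply_symm_apply])
  refine ⟨p, hp_last, fun i hi => ⟨_, hadd _ (symm_ne_last hi), ?_⟩, fun i j hij hj => ?_⟩
  · simp [signedPerm_eps, hp_last]
  · have hprec : Precedes R (p.symm i) (p.symm j) := (hp _ _).1 (by simpa using hij)
    exact ⟨_, hprec.2.resolve_left (symm_ne_last hj), by simp [signedPerm_eps]⟩

/-- The index `n - 1` of the paper, for `n = m + 3`. -/
def penult (m : ℕ) : Fin (m + 3) := ⟨m + 1, by omega⟩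

theorem penult_ne_last (m : ℕ) : penult m ≠ Fin.last (m + 2) := by
  simp [penult, Fin.ext_iff]

theorem lt_penult_of_ne {m : ℕ} {i : Fin (m + 3)} (hi : i ≠ Fin.last (m + 2)) (hi' : i ≠ penult m) :
    i < penult m := by
  simp only [penult, Fin.ext_iff, Fin.lt_def, Fin.val_last, ne_eq] at *
  omega

theorem typeC_eq_insert_sigma (m : ℕ) :
    typeC m = insert (sigma (eps (penult m) - eps (Fin.last (m + 2))))
      (Rplus (m + 3) \ {eps (penult m) - eps (Fin.last (m + 2))}) := by
  have hσ : sigma (eps (penult m) - eps (Fin.last (m + 2))) =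
      -(eps (penult m) + eps (Fin.last (m + 2))) := by
    rw [sigma_sub, sigma_eps_of_ne_last (penult_ne_last m), sigma_eps_last]
    abel
  rw [hσ, ← Set.union_singleton]
  rfl

theorem mem_typeC_or_sigma_mem_typeC {m : ℕ} {v : Fin (m + 3) → ℤ} (hv : v ∈ Roots (m + 3)) :
    v ∈ typeC m ∨ sigma v ∈ typeC m := by
  rw [typeC_eq_insert_sigma]
  set w := eps (penult m) - eps (Fin.last (m + 2))
  by_cases hvw : v = w
  · exact Or.inr (Or.inl (congrArg sigma hvw))
  by_cases hσw : sigma v = w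
  · exact Or.inl (Or.inl (by rw [← hσw, sigma_sigma]))
  exact (mem_Rplus_or_sigma_mem_Rplus hv).imp (fun h => Or.inr ⟨h, hvw⟩) fun h => Or.inr ⟨h, hσw⟩

namespace IsSigmaPositive

variable {m : ℕ} {R : Set (Fin (m + 3) → ℤ)} {i j : Fin (m + 3)}

theorem eps_add_eps_mem (hR : IsSigmaPositive R) (hN : IsNormalized R)
    (hi : i ≠ Fin.last (m + 2)) (hj : j ≠ Fin.last (m + 2)) (hij : i ≠ j) :
    eps i + eps j ∈ R := by
  refine (hR.mem_or_sigma_mem (eps_add_eps_mem_Roots hij)).resolve_right fun h => ?_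
  have hsum : sigma (eps i + eps j) + (eps i + eps (Fin.last (m + 2))) =
      eps (Fin.last (m + 2)) - eps j := by
    rw [sigma_add, sigma_eps_of_ne_last hi, sigma_eps_of_ne_last hj]
    abel
  have hσ : sigma (eps j + eps (Fin.last (m + 2))) = eps (Fin.last (m + 2)) - eps j := by
    simp [hj, sub_eq_neg_add]
  have hmem := hR.add_mem h (hN.eps_add_eps_last_mem i hi)
    (hsum ▸ eps_sub_eps_mem_Roots hj.symm)
  rw [hsum, ← hσ] at hmem
  exact hR.sigma_notMem (hN.eps_add_eps_last_mem j hj) hmem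

theorem eps_sub_eps_last_mem (hR : IsSigmaPositive R) (hN : IsNormalized R)
    (hi : i ≠ Fin.last (m + 2)) (hi' : i ≠ penult m) : eps i - eps (Fin.last (m + 2)) ∈ R := by
  refine (hR.mem_or_sigma_mem (eps_sub_eps_mem_Roots hi)).resolve_right fun h => ?_
  have hsum : sigma (eps i - eps (Fin.last (m + 2))) + (eps (penult m) + eps (Fin.last (m + 2))) =
      eps (penult m) - eps i := by
    rw [sigma_sub, sigma_eps_of_ne_last hi, sigma_eps_last]
    abel
  have hmem := hR.add_mem h (hN.eps_add_eps_last_mem _ (penult_ne_last m))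
    (hsum ▸ eps_sub_eps_mem_Roots hi'.symm)
  rw [hsum] at hmem
  exact hR.eps_sub_eps_notMem (penult_ne_last m) hi hmem
    (hN.eps_sub_eps_mem _ _ (lt_penult_of_ne hi hi') (penult_ne_last m))

theorem Rplus_diff_subset (hR : IsSigmaPositive R) (hN : IsNormalized R) :
    Rplus (m + 3) \ {eps (penult m) - eps (Fin.last (m + 2))} ⊆ R := by
  rintro v ⟨⟨i, j, hij, hv⟩, hne⟩
  have hi : i ≠ Fin.last (m + 2) := Fin.ne_last_of_lt hij
  by_cases hj : j = Fin.last (m + 2)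
  · subst hj
    rcases hv with rfl | rfl
    · exact hN.eps_add_eps_last_mem i hi
    · exact hR.eps_sub_eps_last_mem hN hi fun h => hne (by rw [h]; rfl)
  · rcases hv with rfl | rfl
    · exact hR.eps_add_eps_mem hN hi hj hij.ne
    · exact hN.eps_sub_eps_mem i j hij hj

theorem eq_Rplus_or_eq_typeC (hR : IsSigmaPositive R) (hN : IsNormalized R) :
    R = Rplus (m + 3) ∨ R = typeC m := by
  have hdiff := hR.Rplus_diff_subset hN
  refine (hR.mem_or_sigma_mem (eps_sub_eps_mem_Roots (penult_ne_last m))).imp (fun h => ?_)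
    fun h => ?_
  · refine hR.eq_of_subset ?_ fun v => mem_Rplus_or_sigma_mem_Rplus
    exact (Set.subset_insert_sdiff_singleton _ _).trans (Set.insert_subset h hdiff)
  · refine hR.eq_of_subset ?_ fun v => mem_typeC_or_sigma_mem_typeC
    exact typeC_eq_insert_sigma m ▸ Set.insert_subset h hdiff

theorem exists_isNormalized (hR : IsSigmaPositive R) :
    ∃ (p : Equiv.Perm (Fin (m + 3))) (s : Fin (m + 3) → ℤˣ),
      p (Fin.last (m + 2)) = Fin.last (m + 2) ∧ IsNormalized (signedPerm p s '' R) := by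
  obtain ⟨s, hs⟩ := hR.exists_signs
  obtain ⟨p, hp, hN⟩ := (hR.image_signedPerm rfl s).exists_perm_isNormalized hs
  simp only [Set.image_image, signedPerm_signedPerm] at hN
  exact ⟨_, _, hp, hN⟩

end IsSigmaPositive

theorem sigma_positive_classification_general (m : ℕ)
    (R₀ : Set (Fin (m + 3) → ℤ)) (hR₀ : IsSigmaPositive R₀) :
    Equivalent R₀ (Rplus (m + 3)) ∨ Equivalent R₀ (typeC m) := by
  obtain ⟨p, s, hp, hN⟩ := hR₀.exists_isNormalized
  have hequiv : Equivalent R₀ (signedPerm p s '' R₀) := equivalent_image_signedPerm hp s R₀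
  rcases (hR₀.image_signedPerm hp s).eq_Rplus_or_eq_typeC hN with h | h
  · exact Or.inl (h ▸ hequiv)
  · exact Or.inr (h ▸ hequiv)

/-- **Proposition `clasif2`.**  For `n = m + 3 ≥ 3`, every
`σ`-positive system of the root system of `so_{2n}(ℂ)` (with `σ` induced by
`ε_i ↦ -ε_i` for `i < n`, `ε_n ↦ ε_n`) is equivalent to one of
(a) `R⁺ = {ε_i ± ε_j : i < j}`,
(b) `(R⁺ ∖ {ε_{n-1} + ε_n}) ∪ {ε_n − ε_{n-1}}`, or
(c) `(R⁺ ∖ {ε_{n-1} − ε_n}) ∪ {−(ε_{n-1} + ε_n)}`. -/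
theorem sigma_positive_classification (m : ℕ)
    (R₀ : Set (Fin (m + 3) → ℤ)) (hR₀ : IsSigmaPositive R₀) :
    Equivalent R₀ (Rplus (m + 3)) ∨ Equivalent R₀ (typeB m) ∨ Equivalent R₀ (typeC m) :=
  (sigma_positive_classification_general m R₀ hR₀).imp_right Or.inr

end SOSigmaPositive
end

section
/- Let R be the root system of E₆ realized in the dual of ℂ⁶: R = {±(ε_i − ε_j) : 1 ≤ i < j ≤ 6} ∪ {±(ε_i + ε_j + ε_k) : 1 ≤ i < j < k ≤ 6} ∪ {±(ε₁ + ⋯ + ε₆)}. Let θ be the linear involution of the span of R determined on the simple roots by θ(ε₁−ε₂) = ε₅−ε₆, θ(ε₂−ε₃) = ε₄−ε₅, θ(ε₃−ε₄) = ε₃−ε₄, θ(ε₄−ε₅) = ε₂−ε₃, θ(ε₅−ε₆) = ε₁−ε₂, θ(ε₄+ε₅+ε₆) = ε₄+ε₅+ε₆, and let σ act on R by σ(α) = −θ(α). If R₀ ⊆ R is a σ-positive system containing {±(ε_i − ε_j) : 1 ≤ i < j ≤ 3} ∪ {ε₃ − ε₄, ε₄ + ε₅ + ε₆}, then R₀ =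 {±(ε_i − ε_j) : 1 ≤ i < j ≤ 3} ∪ {ε_i − ε_j : i ≤ 3 < j ≤ 6} ∪ {ε_i + ε_j + ε_k : 1 ≤ i < j < k ≤ 6} ∪ {ε₁ + ⋯ + ε₆}. -/
/-!
The chain rule `(ε_i - ε_j) + (ε_j - ε_k) = ε_i - ε_k` governs the differences. If `ε₃ - ε_j` with
`j > 3` were not in `R₀`, its `σ`-image `ε₄ - ε_{7-j}` would be; the roots `±(ε_i - ε_j)` with
`i, j ≤ 3` then carry it to `ε₄ - ε₃ = σ(ε₃ - ε₄)`, contradicting `ε₃ - ε₄ ∈ R₀`. Hence `R₀`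
contains every `ε_i - ε_j` with `i ≤ 3`. Adding those with `j > 3` exchanges the indices of
`ε₄ + ε₅ + ε₆` one by one for smaller ones, giving all triple sums, and
`(ε₁ + ε₂ + ε₃) + (ε₄ + ε₅ + ε₆)` is the sum of all `ε_i`. So `R₀⁽¹⁾ ⊆ R₀`; as every root or its
`σ`-image lies in `R₀⁽¹⁾`, disjointness of `R₀` and `σ(R₀)` forces equality.
-/

namespace E6SigmaPositive

open Finset

/-- The coordinate functionals `ε_i` on `ℂ⁶`, realized as rational vectors. -/
def eps (i : Fin 6) : Fin 6 → ℚ := Pi.single i 1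

/-- The vector `ε₁ + ⋯ + ε₆`. -/
def ones : Fin 6 → ℚ := fun _ => 1

/-- The root system of `E₆`:
`R = {±(ε_i − ε_j)} ∪ {±(ε_i + ε_j + ε_k)} ∪ {±(ε₁ + ⋯ + ε₆)}`. -/
def Roots : Set (Fin 6 → ℚ) :=
  {v | ∃ i j : Fin 6, i ≠ j ∧ v = eps i - eps j}
  ∪ {v | ∃ i j k : Fin 6, i < j ∧ j < k ∧
      (v = eps i + eps j + eps k ∨ v = -(eps i + eps j + eps k))}
  ∪ {ones, -ones}

/-- The linear involution `θ` of the span of `R` determined by the horizontal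
reversal of the Dynkin diagram of `E₆`; on the basis it is given by
`θ(ε_i) = (ε₁ + ⋯ + ε₆)/3 − ε_{7−i}`. -/
def theta (v : Fin 6 → ℚ) : Fin 6 → ℚ :=
  fun j => (∑ i, v i) / 3 - v j.rev

/-- The involution `σ(α) = -θ(α)`. -/
def sigma (v : Fin 6 → ℚ) : Fin 6 → ℚ := -theta v

/-- A `σ`-positive system: a closed subset `R₀ ⊆ R` with `R₀ ∪ σ(R₀) = R` and
`R₀ ∩ σ(R₀) = ∅`. -/
def IsSigmaPositive (R₀ : Set (Fin 6 → ℚ)) : Prop :=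
  R₀ ⊆ Roots
  ∧ (∀ α ∈ R₀, ∀ β ∈ R₀, α + β ∈ Roots → α + β ∈ R₀)
  ∧ R₀ ∪ sigma '' R₀ = Roots
  ∧ R₀ ∩ sigma '' R₀ = ∅

/-- The set `{±(ε_i − ε_j) : 1 ≤ i < j ≤ 3} ∪ {ε₃ − ε₄, ε₄ + ε₅ + ε₆}`
(in 1-based notation). -/
def baseSet : Set (Fin 6 → ℚ) :=
  {v | ∃ i j : Fin 6, i < j ∧ (j : ℕ) ≤ 2 ∧ (v = eps i - eps j ∨ v = eps j - eps i)}
  ∪ {eps 2 - eps 3, eps 3 + eps 4 + eps 5}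

/-- The system `R₀⁽¹⁾ = {±(ε_i − ε_j) : 1 ≤ i < j ≤ 3} ∪ {ε_i − ε_j : i ≤ 3 < j}
∪ {ε_i + ε_j + ε_k} ∪ {ε₁ + ⋯ + ε₆}` (in 1-based notation). -/
def R01 : Set (Fin 6 → ℚ) :=
  {v | ∃ i j : Fin 6, i < j ∧ (j : ℕ) ≤ 2 ∧ (v = eps i - eps j ∨ v = eps j - eps i)}
  ∪ {v | ∃ i j : Fin 6, (i : ℕ) ≤ 2 ∧ 3 ≤ (j : ℕ) ∧ v = eps i - eps j}
  ∪ {v | ∃ i j k : Fin 6, i < j ∧ j < k ∧ v = eps i + eps j + eps k}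
  ∪ {ones}

theorem eps_apply (i m : Fin 6) : eps i m = if m = i then 1 else 0 :=
  Pi.single_apply i 1 m

/-- The vector `∑_{i ∈ s} ε_i`. The positive triple sums of the root system are the `epsSum s` with
`#s = 3`; indexing them by unordered sets avoids sorting indices when one is replaced. -/
def epsSum (s : Finset (Fin 6)) : Fin 6 → ℚ := ∑ i ∈ s, eps i

theorem epsSum_apply (s : Finset (Fin 6)) (m : Fin 6) : epsSum s m = if m ∈ s then 1 else 0 := by
  simp [epsSum, eps_apply]

theorem epsSum_add_epsSum_compl (s : Finset (Fin 6)) : epsSum s + epsSum sᶜ = ones := by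
  ext m
  by_cases hm : m ∈ s <;> simp [epsSum_apply, ones, hm]

theorem eps_sub_eps_add_epsSum_insert_erase {s : Finset (Fin 6)} {i j : Fin 6} (hi : i ∈ s)
    (hj : j ∉ s) : eps i - eps j + epsSum (insert j (s.erase i)) = epsSum s := by
  have hj' : j ∉ s.erase i := fun h ↦ hj (mem_of_mem_erase h)
  rw [epsSum, epsSum, sum_insert hj', ← add_assoc, sub_add_cancel, add_sum_erase s eps hi]

theorem exists_lt_lt_iff_exists_card_eq_three {P : (Fin 6 → ℚ) → Prop} :
    (∃ i j k : Fin 6, i < j ∧ j < k ∧ P (eps i + eps j + eps k)) ↔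
      ∃ s : Finset (Fin 6), #s = 3 ∧ P (epsSum s) := by
  constructor
  · rintro ⟨i, j, k, hij, hjk, hP⟩
    have hik := hij.trans hjk
    refine ⟨{i, j, k}, card_eq_three.2 ⟨i, j, k, hij.ne, hik.ne, hjk.ne, rfl⟩, ?_⟩
    have hsum : epsSum {i, j, k} = eps i + eps j + eps k := by
      simp [epsSum, hij.ne, hik.ne, hjk.ne, add_assoc]
    rwa [hsum]
  · rintro ⟨s, hs, hP⟩
    let e := s.orderEmbOfFin hs
    have hsum : epsSum s = eps (e 0) + eps (e 1) + eps (e 2) := by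
      rw [epsSum, ← s.map_orderEmbOfFin_univ hs, sum_map, Fin.sum_univ_three]
      rfl
    exact ⟨e 0, e 1, e 2, e.strictMono (by decide), e.strictMono (by decide), hsum ▸ hP⟩

theorem mem_Roots_iff {v : Fin 6 → ℚ} :
    v ∈ Roots ↔ (∃ i j : Fin 6, i ≠ j ∧ v = eps i - eps j) ∨
      (∃ s : Finset (Fin 6), #s = 3 ∧ (v = epsSum s ∨ v = -epsSum s)) ∨ v = ones ∨ v = -ones := by
  rw [← exists_lt_lt_iff_exists_card_eq_three (P := fun w ↦ v = w ∨ v = -w), ← or_assoc]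
  rfl

theorem eps_sub_eps_mem_Roots {i j : Fin 6} (hij : i ≠ j) : eps i - eps j ∈ Roots :=
  mem_Roots_iff.2 (Or.inl ⟨i, j, hij, rfl⟩)

theorem epsSum_mem_Roots {s : Finset (Fin 6)} (hs : #s = 3) : epsSum s ∈ Roots :=
  mem_Roots_iff.2 (Or.inr (Or.inl ⟨s, hs, Or.inl rfl⟩))

theorem ones_mem_Roots : ones ∈ Roots :=
  mem_Roots_iff.2 (Or.inr (Or.inr (Or.inl rfl)))

theorem exists_lt_le_two_iff_exists_ne {v : Fin 6 → ℚ} :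
    (∃ i j : Fin 6, i < j ∧ (j : ℕ) ≤ 2 ∧ (v = eps i - eps j ∨ v = eps j - eps i)) ↔
      ∃ i j : Fin 6, i ≠ j ∧ i ≤ 2 ∧ j ≤ 2 ∧ v = eps i - eps j := by
  constructor
  · rintro ⟨i, j, hij, hj, rfl | rfl⟩
    · exact ⟨i, j, hij.ne, hij.le.trans hj, hj, rfl⟩
    · exact ⟨j, i, hij.ne', hj, hij.le.trans hj, rfl⟩
  · rintro ⟨i, j, hij, hi, hj, rfl⟩
    rcases hij.lt_or_gt with h | h
    · exact ⟨i, j, h, hj, Or.inl rfl⟩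
    · exact ⟨j, i, h, hi, Or.inr rfl⟩

theorem eps_sub_eps_mem_baseSet {i j : Fin 6} (hij : i ≠ j) (hi : i ≤ 2) (hj : j ≤ 2) :
    eps i - eps j ∈ baseSet :=
  Or.inl (exists_lt_le_two_iff_exists_ne.2 ⟨i, j, hij, hi, hj, rfl⟩)

theorem epsSum_Ici_mem_baseSet : epsSum (Ici 3) ∈ baseSet := by
  have hIci : Ici (3 : Fin 6) = {3, 4, 5} := by decide
  exact Or.inr (Or.inr (by simp [hIci, epsSum, add_assoc]))

theorem mem_R01_iff {v : Fin 6 → ℚ} :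
    v ∈ R01 ↔ (∃ i j : Fin 6, i ≠ j ∧ i ≤ 2 ∧ v = eps i - eps j) ∨
      (∃ s : Finset (Fin 6), #s = 3 ∧ v = epsSum s) ∨ v = ones := by
  rw [← exists_lt_lt_iff_exists_card_eq_three (P := fun w ↦ v = w), ← or_assoc]
  refine or_congr_left (or_congr_left ?_)
  refine (or_congr_left exists_lt_le_two_iff_exists_ne).trans ⟨?_, ?_⟩
  · rintro (⟨i, j, hij, hi, -, rfl⟩ | ⟨i, j, hi, hj, rfl⟩)
    · exact ⟨i, j, hij, hi, rfl⟩
    · exact ⟨i, j, by omega, hi, rfl⟩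
  · rintro ⟨i, j, hij, hi, rfl⟩
    rcases le_or_gt j 2 with hj | hj
    · exact Or.inl ⟨i, j, hij, hi, hj, rfl⟩
    · exact Or.inr ⟨i, j, hi, hj, rfl⟩

theorem sigma_apply (v : Fin 6 → ℚ) (m : Fin 6) : sigma v m = v m.rev - (∑ i, v i) / 3 := by
  simp [sigma, theta]

theorem sigma_involutive : Function.Involutive sigma := by
  intro v
  ext m
  have hrev : ∑ i : Fin 6, v i.rev = ∑ i, v i := Equiv.sum_comp Fin.revPerm v
  simp only [sigma_apply, Fin.rev_rev, sum_sub_distrib, hrev, sum_const, card_univ,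
    Fintype.card_fin, nsmul_eq_mul]
  ring

theorem sigma_eps_sub_eps (i j : Fin 6) : sigma (eps i - eps j) = eps i.rev - eps j.rev := by
  ext m
  simp [sigma_apply, eps_apply, Fin.rev_eq_iff]

theorem sigma_neg_epsSum {s : Finset (Fin 6)} (hs : #s = 3) :
    sigma (-epsSum s) = epsSum (sᶜ.map Fin.revPerm.toEmbedding) := by
  ext m
  by_cases hm : m.rev ∈ s <;>
    simp [sigma_apply, epsSum_apply, mem_map_equiv, hs, hm]

theorem sigma_neg_ones : sigma (-ones) = ones := by
  ext m
  norm_num [sigma_apply, ones]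

theorem mem_R01_or_sigma_mem_R01 {v : Fin 6 → ℚ} (hv : v ∈ Roots) : v ∈ R01 ∨ sigma v ∈ R01 := by
  simp only [mem_R01_iff]
  rcases mem_Roots_iff.1 hv with ⟨i, j, hij, rfl⟩ | ⟨s, hs, rfl | rfl⟩ | rfl | rfl
  · rcases le_or_gt i 2 with hi | hi
    · exact Or.inl (Or.inl ⟨i, j, hij, hi, rfl⟩)
    · have hrev : i.rev ≤ 2 := Fin.rev_le_iff.2 hi
      exact Or.inr (Or.inl ⟨i.rev, j.rev, Fin.rev_injective.ne hij, hrev, sigma_eps_sub_eps i j⟩)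
  · exact Or.inl (Or.inr (Or.inl ⟨s, hs, rfl⟩))
  · have hcard : #(sᶜ.map Fin.revPerm.toEmbedding) = 3 := by simp [card_compl, hs]
    exact Or.inr (Or.inr (Or.inl ⟨_, hcard, sigma_neg_epsSum hs⟩))
  · exact Or.inl (Or.inr (Or.inr rfl))
  · exact Or.inr (Or.inr (Or.inr sigma_neg_ones))

namespace IsSigmaPositive

variable {R₀ : Set (Fin 6 → ℚ)} (hR₀ : IsSigmaPositive R₀)

include hR₀

theorem add_mem {α β : Fin 6 → ℚ} (hα : α ∈ R₀) (hβ : β ∈ R₀) (h : α + β ∈ Roots) :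
    α + β ∈ R₀ :=
  hR₀.2.1 α hα β hβ h

theorem sigma_notMem {v : Fin 6 → ℚ} (hv : v ∈ R₀) : sigma v ∉ R₀ := fun h ↦
  (Set.disjoint_iff_inter_eq_empty.2 hR₀.2.2.2).notMem_of_mem_left h (Set.mem_image_of_mem sigma hv)

theorem mem_or_sigma_mem {v : Fin 6 → ℚ} (hv : v ∈ Roots) : v ∈ R₀ ∨ sigma v ∈ R₀ := by
  rwa [← hR₀.2.2.1, sigma_involutive.image_eq_preimage_symm] at hv

theorem eq_of_subset {A : Set (Fin 6 → ℚ)} (hA : A ⊆ R₀)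
    (hcover : ∀ v ∈ Roots, v ∈ A ∨ sigma v ∈ A) : R₀ = A :=
  Set.Subset.antisymm
    (fun v hv ↦ (hcover v (hR₀.1 hv)).resolve_right fun h ↦ hR₀.sigma_notMem hv (hA h)) hA

theorem eps_sub_eps_trans {i j k : Fin 6} (hij : eps i - eps j ∈ R₀) (hjk : eps j - eps k ∈ R₀)
    (hik : i ≠ k) : eps i - eps k ∈ R₀ := by
  rw [← sub_add_sub_cancel (eps i) (eps j)]
  exact hR₀.add_mem hij hjk (by simpa only [sub_add_sub_cancel] using eps_sub_eps_mem_Roots hik)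

theorem epsSum_mem_of_exchange {s t : Finset (Fin 6)} (hs : #s = 3) (ht : #t = 3)
    (htR₀ : epsSum t ∈ R₀) (hdiff : ∀ i ∈ s \ t, ∀ j ∈ t \ s, eps i - eps j ∈ R₀) :
    epsSum s ∈ R₀ := by
  induction hn : #(s \ t) generalizing s with
  | zero =>
    have hst : s ⊆ t := sdiff_eq_empty_iff_subset.1 (card_eq_zero.1 hn)
    rwa [eq_of_subset_of_card_le hst (by omega)]
  | succ n ih =>
    obtain ⟨i, hi⟩ : (s \ t).Nonempty := card_pos.1 (by omega)
    obtain ⟨j, hj⟩ : (t \ s).Nonempty := by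
      rw [← card_pos, card_sdiff_comm (ht.trans hs.symm)]
      omega
    obtain ⟨his, hit⟩ := mem_sdiff.1 hi
    obtain ⟨hjt, hjs⟩ := mem_sdiff.1 hj
    let s' := insert j (s.erase i)
    have hs' : #s' = 3 := by
      rw [card_insert_of_notMem fun h ↦ hjs (mem_of_mem_erase h), card_erase_add_one his, hs]
    have hsdiff : s' \ t = (s \ t).erase i := by
      rw [insert_sdiff_of_mem _ hjt, erase_sdiff_comm]
    have hmem : epsSum s' ∈ R₀ := by
      refine ih hs' (fun x hx y hy ↦ hdiff x ?_ y ?_) ?_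
      · exact mem_of_mem_erase (hsdiff ▸ hx)
      · grind
      · rw [hsdiff, card_erase_of_mem hi, hn, Nat.add_sub_cancel]
    rw [← eps_sub_eps_add_epsSum_insert_erase his hjs]
    refine hR₀.add_mem (hdiff i hi j hj) hmem ?_
    rw [eps_sub_eps_add_epsSum_insert_erase his hjs]
    exact epsSum_mem_Roots hs

variable (hbase : baseSet ⊆ R₀)

include hbase

theorem eps_two_sub_eps_mem {j : Fin 6} (hj : 2 < j) : eps 2 - eps j ∈ R₀ := by
  refine (hR₀.mem_or_sigma_mem (eps_sub_eps_mem_Roots hj.ne)).resolve_right fun hσ ↦ ?_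
  have h23 : eps 2 - eps 3 ∈ R₀ := hbase (Or.inr (Or.inl rfl))
  have h32 : eps 3 - eps 2 ∈ R₀ := by
    have h3j : eps 3 - eps j.rev ∈ R₀ := by rwa [sigma_eps_sub_eps] at hσ
    have hrev : j.rev ≤ 2 := Fin.rev_le_iff.2 hj
    rcases eq_or_ne j.rev 2 with h | h
    · rwa [h] at h3j
    · exact hR₀.eps_sub_eps_trans h3j (hbase (eps_sub_eps_mem_baseSet h hrev le_rfl)) (by decide)
  exact hR₀.sigma_notMem h23 (by rwa [sigma_eps_sub_eps])

theorem eps_sub_eps_mem {i j : Fin 6} (hij : i ≠ j) (hi : i ≤ 2) : eps i - eps j ∈ R₀ := by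
  rcases le_or_gt j 2 with hj | hj
  · exact hbase (eps_sub_eps_mem_baseSet hij hi hj)
  have h2j : eps 2 - eps j ∈ R₀ := hR₀.eps_two_sub_eps_mem hbase hj
  rcases eq_or_ne i 2 with rfl | hi2
  · exact h2j
  · exact hR₀.eps_sub_eps_trans (hbase (eps_sub_eps_mem_baseSet hi2 hi le_rfl)) h2j hij

theorem epsSum_mem {s : Finset (Fin 6)} (hs : #s = 3) : epsSum s ∈ R₀ := by
  refine hR₀.epsSum_mem_of_exchange hs (by decide) (hbase epsSum_Ici_mem_baseSet) ?_
  intro i hi j hj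
  have hi3 : i < 3 := not_le.1 fun h ↦ (mem_sdiff.1 hi).2 (mem_Ici.2 h)
  have h3j : 3 ≤ j := mem_Ici.1 (mem_sdiff.1 hj).1
  exact hR₀.eps_sub_eps_mem hbase (hi3.trans_le h3j).ne (by omega)

theorem ones_mem : ones ∈ R₀ := by
  rw [← epsSum_add_epsSum_compl (Ici 3)]
  refine hR₀.add_mem (hR₀.epsSum_mem hbase (by decide)) (hR₀.epsSum_mem hbase (by decide)) ?_
  rw [epsSum_add_epsSum_compl]
  exact ones_mem_Roots

theorem R01_subset : R01 ⊆ R₀ := by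
  intro v hv
  rcases mem_R01_iff.1 hv with ⟨i, j, hij, hi, rfl⟩ | ⟨s, hs, rfl⟩ | rfl
  · exact hR₀.eps_sub_eps_mem hbase hij hi
  · exact hR₀.epsSum_mem hbase hs
  · exact hR₀.ones_mem hbase

end IsSigmaPositive

/-- If `R₀` is a `σ`-positive system of the root system of `E₆`
containing `{±(ε_i − ε_j) : 1 ≤ i < j ≤ 3} ∪ {ε₃ − ε₄, ε₄ + ε₅ + ε₆}`, then
`R₀ = R₀⁽¹⁾`. -/
theorem sigma_positive_containing_base_eq (R₀ : Set (Fin 6 → ℚ))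
    (hR₀ : IsSigmaPositive R₀) (hbase : baseSet ⊆ R₀) :
    R₀ = R01 := by
  exact hR₀.eq_of_subset (hR₀.R01_subset hbase) fun _ ↦ mem_R01_or_sigma_mem_R01

end E6SigmaPositive
end

section
/- Let g^ℂ be a finite-dimensional complex semisimple Lie algebra with Cartan subalgebra h, root system R and a fixed Weyl basis {E_α}, and let k = h₀ + g(R₀) be a Lie subalgebra of g^ℂ, where h₀ ⊆ h, R₀ ⊆ R is a closed subset, and [g_α, g_{−α}] ⊆ h₀ for every α ∈ R₀^sym := R₀ ∩ (−R₀). Then the trivial extension to k of a 2-form ω̂₀ ∈ Λ²(h₀*) (extended by 0 on g(R₀)) is a closed 2-form on k if and only if ω̂₀([E_α, E_{−α}], H) = 0 for every α ∈ R₀^sym and every H ∈ h₀. -/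
/-!
Write `n = g(R₀)`. Since `n` is annihilated by `ω` and normalized by `h₀`, all the mixed terms
of `dω` on `h₀ + n` vanish except `ω(a, [u, v])` with `a ∈ h₀` and `u, v ∈ n`. On root vectors,
`[u, v]` lies in `n` unless the two roots are opposite, so only the brackets `[E_α, E_{-α}]` can
obstruct closedness.
-/

section TrivialExtension

variable {K L M : Type*} [CommRing K] [LieRing L] [LieAlgebra K L] [AddCommGroup M] [Module K M]
  {ω : L →ₗ[K] L →ₗ[K] M} {h₀ n : Submodule K L}

/-- Closedness of a 2-form along a subspace `p`, i.e. vanishing of its Chevalley–Eilenberg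
differential on `p`. The form is defined on all of `L`, so that `p` may be any submodule rather
than a Lie subalgebra. -/
def IsClosedTwoFormOn (ω : L →ₗ[K] L →ₗ[K] M) (p : Submodule K L) : Prop :=
  ∀ x ∈ p, ∀ y ∈ p, ∀ z ∈ p, ω x ⁅y, z⁆ + ω z ⁅x, y⁆ + ω y ⁅z, x⁆ = 0

theorem IsClosedTwoFormOn.of_lie_eq_zero (hab : ∀ x ∈ h₀, ∀ y ∈ h₀, ⁅x, y⁆ = 0) :
    IsClosedTwoFormOn ω h₀ := by
  intro x hx y hy z hz
  rw [hab y hy z hz, hab x hx y hy, hab z hz x hx]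
  simp only [map_zero, add_zero]

theorem lie_mem_of_mem_span {s t : Set L} {p : Submodule K L}
    (hst : ∀ x ∈ s, ∀ y ∈ t, ⁅x, y⁆ ∈ p) {x y : L}
    (hx : x ∈ Submodule.span K s) (hy : y ∈ Submodule.span K t) : ⁅x, y⁆ ∈ p := by
  let bracket : L →ₗ[K] L →ₗ[K] L := LieModule.toEnd K L L
  have hle : Submodule.map₂ bracket (Submodule.span K s) (Submodule.span K t) ≤ p := by
    rw [Submodule.map₂_span_span, Submodule.span_le]
    exact Set.image2_subset_iff.mpr hst
  exact hle (Submodule.apply_mem_map₂ bracket hx hy)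

theorem apply_lie_add_of_le_ker (hω : ω.IsRefl) (hker : n ≤ LinearMap.ker ω)
    (hnorm : ∀ x ∈ h₀, ∀ u ∈ n, ⁅x, u⁆ ∈ n) {b c : L} (a : L) (hb : b ∈ h₀) (hc : c ∈ h₀)
    {u v w : L} (hu : u ∈ n) (hv : v ∈ n) (hw : w ∈ n) :
    ω (a + u) ⁅b + v, c + w⁆ = ω a ⁅b, c⁆ + ω a ⁅v, w⁆ := by
  have left_zero : ∀ {u}, u ∈ n → ω u = 0 := fun hu ↦ LinearMap.mem_ker.mp (hker hu)
  have right_zero : ∀ {u}, u ∈ n → ω a u = 0 := fun {u} hu ↦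
    hω u a (by rw [left_zero hu, LinearMap.zero_apply])
  have hbw : ω a ⁅b, w⁆ = 0 := right_zero (hnorm b hb w hw)
  have hvc : ω a ⁅v, c⁆ = 0 := by
    rw [← lie_skew, map_neg, right_zero (hnorm c hc v hv), neg_zero]
  simp only [map_add, left_zero hu, add_zero, add_lie, lie_add, hbw, hvc, zero_add]

theorem isClosedTwoFormOn_sup_iff (hω : ω.IsRefl) (hker : n ≤ LinearMap.ker ω)
    (hnorm : ∀ x ∈ h₀, ∀ u ∈ n, ⁅x, u⁆ ∈ n) :
    IsClosedTwoFormOn ω (h₀ ⊔ n) ↔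
      IsClosedTwoFormOn ω h₀ ∧ ∀ x ∈ h₀, ∀ u ∈ n, ∀ v ∈ n, ω x ⁅u, v⁆ = 0 := by
  constructor
  · refine fun hclosed ↦ ⟨fun x hx y hy z hz ↦ ?_, fun x hx u hu v hv ↦ ?_⟩
    · exact hclosed x (Submodule.mem_sup_left hx) y (Submodule.mem_sup_left hy)
        z (Submodule.mem_sup_left hz)
    · have hcyclic := hclosed x (Submodule.mem_sup_left hx) u (Submodule.mem_sup_right hu)
        v (Submodule.mem_sup_right hv)
      rwa [LinearMap.mem_ker.mp (hker hu), LinearMap.mem_ker.mp (hker hv), LinearMap.zero_apply,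
        LinearMap.zero_apply, add_zero, add_zero] at hcyclic
  · rintro ⟨hclosed, hzero⟩ x hx y hy z hz
    obtain ⟨a, ha, u, hu, rfl⟩ := Submodule.mem_sup.mp hx
    obtain ⟨b, hb, v, hv, rfl⟩ := Submodule.mem_sup.mp hy
    obtain ⟨c, hc, w, hw, rfl⟩ := Submodule.mem_sup.mp hz
    rw [apply_lie_add_of_le_ker hω hker hnorm a hb hc hu hv hw,
      apply_lie_add_of_le_ker hω hker hnorm c ha hb hw hu hv,
      apply_lie_add_of_le_ker hω hker hnorm b hc ha hv hw hu,
      hzero a ha v hv w hw, hzero c hc u hu v hv, hzero b hb w hw u hu]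
    simpa only [add_zero] using hclosed a ha b hb c hc

section RootVectors

variable {ι : Type*} {E : ι → L} {R₀ : Set ι}

theorem lie_mem_span_image_of_add_closed [AddGroup ι] {R : Set ι} (hR₀R : R₀ ⊆ R)
    (hadd : ∀ α ∈ R₀, ∀ β ∈ R₀, α + β ∈ R → α + β ∈ R₀) {N : ι → ι → K}
    (hbracket : ∀ α ∈ R, ∀ β ∈ R, α + β ∈ R → ⁅E α, E β⁆ = N α β • E (α + β))
    (hbracket_zero : ∀ α ∈ R, ∀ β ∈ R, α + β ≠ 0 → α + β ∉ R → ⁅E α, E β⁆ = 0)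
    {α β : ι} (hα : α ∈ R₀) (hβ : β ∈ R₀) (hne : β ≠ -α) :
    ⁅E α, E β⁆ ∈ Submodule.span K (E '' R₀) := by
  by_cases hsum : α + β ∈ R
  · rw [hbracket α (hR₀R hα) β (hR₀R hβ) hsum]
    exact Submodule.smul_mem _ _
      (Submodule.subset_span (Set.mem_image_of_mem E (hadd α hα β hβ hsum)))
  · have hsum_ne : α + β ≠ 0 := fun h ↦ hne (neg_eq_of_add_eq_zero_right h).symm
    rw [hbracket_zero α (hR₀R hα) β (hR₀R hβ) hsum_ne hsum]
    exact Submodule.zero_mem _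

theorem forall_apply_lie_span_eq_zero_iff [Neg ι] (hω : ω.IsRefl)
    (hker : Submodule.span K (E '' R₀) ≤ LinearMap.ker ω)
    (hbracket : ∀ α ∈ R₀, ∀ β ∈ R₀, β ≠ -α → ⁅E α, E β⁆ ∈ Submodule.span K (E '' R₀)) (x : L) :
    (∀ u ∈ Submodule.span K (E '' R₀), ∀ v ∈ Submodule.span K (E '' R₀), ω x ⁅u, v⁆ = 0) ↔
      ∀ α ∈ R₀, -α ∈ R₀ → ω ⁅E α, E (-α)⁆ x = 0 := by
  constructor
  · intro hzero α hα hnegα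
    exact hω _ _ (hzero _ (Submodule.subset_span (Set.mem_image_of_mem E hα))
      _ (Submodule.subset_span (Set.mem_image_of_mem E hnegα)))
  · intro hopposite u hu v hv
    refine LinearMap.mem_ker.mp (lie_mem_of_mem_span ?_ hu hv)
    rintro _ ⟨α, hα, rfl⟩ _ ⟨β, hβ, rfl⟩
    refine LinearMap.mem_ker.mpr (hω _ _ ?_)
    by_cases hβα : β = -α
    · subst hβα
      exact hopposite α hα hβ
    · rw [LinearMap.mem_ker.mp (hker (hbracket α hα β hβ hβα)), LinearMap.zero_apply]

theorem trivial_extension_closed_iff_general [Neg ι] (hω : ω.IsAlt)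
    (hclosed : IsClosedTwoFormOn ω h₀)
    (hker : Submodule.span K (E '' R₀) ≤ LinearMap.ker ω)
    (hnorm : ∀ α ∈ R₀, ∀ x ∈ h₀, ⁅x, E α⁆ ∈ Submodule.span K (E '' R₀))
    (hbracket : ∀ α ∈ R₀, ∀ β ∈ R₀, β ≠ -α → ⁅E α, E β⁆ ∈ Submodule.span K (E '' R₀)) :
    IsClosedTwoFormOn ω (h₀ ⊔ Submodule.span K (E '' R₀)) ↔
      ∀ α ∈ R₀, -α ∈ R₀ → ∀ x ∈ h₀, ω ⁅E α, E (-α)⁆ x = 0 := by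
  have hnorm_span : ∀ x ∈ h₀, ∀ u ∈ Submodule.span K (E '' R₀),
      ⁅x, u⁆ ∈ Submodule.span K (E '' R₀) := by
    intro x hx u hu
    refine lie_mem_of_mem_span (s := h₀) ?_ (Submodule.subset_span hx) hu
    rintro y hy _ ⟨α, hα, rfl⟩
    exact hnorm α hα y hy
  rw [isClosedTwoFormOn_sup_iff hω.isRefl hker hnorm_span, and_iff_right hclosed]
  simp only [forall_apply_lie_span_eq_zero_iff hω.isRefl hker hbracket]
  exact ⟨fun h α hα hnegα x hx ↦ h x hx α hα hnegα, fun h x hx α hα hnegα ↦ h α hα hnegα x hx⟩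

end RootVectors

end TrivialExtension

/-- Let `gC` be a finite-dimensional complex semisimple Lie algebra
with Cartan subalgebra `H`, root system `R` and Weyl basis `{E α}`, and let
`k = h₀ + g(R₀)` be a Lie subalgebra, where `h₀ ⊆ H`, `R₀ ⊆ R` is closed and
`[g_α, g_{-α}] ⊆ h₀` for every `α ∈ R₀^sym`.  Then the trivial extension to `k` of a
2-form `ω̂₀` on `h₀` (extended by `0` on `g(R₀)`) is closed on `k` if and only if
`ω̂₀ ⁅E α, E (-α)⁆ H = 0` for every `α ∈ R₀^sym` and every `H ∈ h₀`. -/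
theorem trivial_extension_closed_iff
    {gC : Type*} [LieRing gC] [LieAlgebra ℂ gC] [FiniteDimensional ℂ gC]
    [LieAlgebra.IsSemisimple ℂ gC]
    (H : LieSubalgebra ℂ gC) [H.IsCartanSubalgebra]
    (R : Finset (Module.Dual ℂ gC))
    (E : Module.Dual ℂ gC → gC)
    (N : Module.Dual ℂ gC → Module.Dual ℂ gC → ℝ)
    -- properties of the root space decomposition and the Weyl basis
    (habel : ∀ x ∈ H, ∀ y ∈ H, ⁅x, y⁆ = (0 : gC))
    (hRne : ∀ α ∈ R, α ≠ (0 : Module.Dual ℂ gC))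
    (hRneg : ∀ α ∈ R, -α ∈ R)
    (hEne : ∀ α ∈ R, E α ≠ 0)
    (hroot : ∀ α ∈ R, ∀ x ∈ H, ⁅x, E α⁆ = α x • E α)
    (hαE : ∀ α ∈ R, ∀ β ∈ R, α (E β) = 0)
    (hbracket : ∀ α ∈ R, ∀ β ∈ R, α + β ∈ R → ⁅E α, E β⁆ = (N α β : ℂ) • E (α + β))
    (hbracket0 : ∀ α ∈ R, ∀ β ∈ R, α + β ≠ 0 → α + β ∉ R → ⁅E α, E β⁆ = 0)
    (hcoroot : ∀ α ∈ R, ⁅E α, E (-α)⁆ ∈ H)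
    (hN0 : ∀ α β, α + β ∉ R → N α β = 0)
    (hindep : LinearIndependent ℂ (fun α : {x : Module.Dual ℂ gC // x ∈ R} => E ↑α))
    (hdisj : Disjoint H.toSubmodule (Submodule.span ℂ (E '' ↑R)))
    (hdecomp : H.toSubmodule ⊔ Submodule.span ℂ (E '' ↑R) = ⊤)
    -- the closed subset `R₀ ⊆ R` and the subspace `h₀ ⊆ H`
    (R₀ : Finset (Module.Dual ℂ gC))
    (hR₀R : R₀ ⊆ R)
    (hR₀Closed : ∀ α ∈ R₀, ∀ β ∈ R₀, α + β ∈ R → α + β ∈ R₀)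
    (h₀ : Submodule ℂ gC) (hh₀ : h₀ ≤ H.toSubmodule)
    (hsym : ∀ α ∈ R₀, -α ∈ R₀ → ⁅E α, E (-α)⁆ ∈ h₀)
    -- the regular subalgebra `k = h₀ + g(R₀)`
    (k : Submodule ℂ gC)
    (hk : k = h₀ ⊔ Submodule.span ℂ (E '' ↑R₀))
    -- a 2-form on `h₀`, trivially extended to `k` by `0` on `g(R₀)`
    (ω₀ : gC →ₗ[ℂ] gC →ₗ[ℂ] ℂ)
    (halt : ∀ x : gC, ω₀ x x = 0)
    (htriv : ∀ x y : gC, x ∈ Submodule.span ℂ (E '' ↑R₀) ∨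
        y ∈ Submodule.span ℂ (E '' ↑R₀) → ω₀ x y = 0) :
    (∀ x ∈ k, ∀ y ∈ k, ∀ z ∈ k, ω₀ x ⁅y, z⁆ + ω₀ z ⁅x, y⁆ + ω₀ y ⁅z, x⁆ = 0)
      ↔ (∀ α ∈ R₀, -α ∈ R₀ → ∀ x ∈ h₀, ω₀ ⁅E α, E (-α)⁆ x = 0) := by
  subst hk
  exact trivial_extension_closed_iff_general halt
    (.of_lie_eq_zero fun x hx y hy ↦ habel x (hh₀ hx) y (hh₀ hy))
    (fun u hu ↦ LinearMap.mem_ker.mpr (LinearMap.ext fun y ↦ htriv u y (.inl hu)))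
    (fun α hα x hx ↦ hroot α (hR₀R hα) x (hh₀ hx) ▸
      Submodule.smul_mem _ _ (Submodule.subset_span (Set.mem_image_of_mem E hα)))
    (fun _ hα _ hβ ↦ lie_mem_span_image_of_add_closed hR₀R hR₀Closed hbracket hbracket0 hα hβ)
end
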